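/- For every policy π visited by Bland(𝔅_n, π_0, 𝒩_{𝔅_n}), at most one of the edges travel(i) with i ∈ {1,…,n} is an improving switch for π. -/

import Mathlib

/-! ## The Markov decision process `𝔅_n` -/

/-- Vertices of the MDP `𝔅_n`: a transportation vertex `t`, a sink `s`, a dummy vertex `d`,
and vertices `a i`, `b i` for `i ∈ {1,…,n}`. -/
inductive BV : Type where
  | t : BV
  | s : BV
  | d : BV
  | a : ℕ → BV
  | b : ℕ → BV
deriving DecidableEq

/-- The vertex `a i` for `i ∈ {1,…,n+1}`, with the convention `a (n+1) = s`. -/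
def aN (n i : ℕ) : BV := if i = n + 1 then BV.s else BV.a i

/-- The vertex `b i` for `i ∈ {1,…,n+1}`, with the convention `b (n+1) = d`. -/
def bN (n i : ℕ) : BV := if i = n + 1 then BV.d else BV.b i

/-- The vertex set of `𝔅_n`. -/
def IsBVertex (n : ℕ) : BV → Prop
  | BV.t => True
  | BV.s => True
  | BV.d => True
  | BV.a i => 1 ≤ i ∧ i ≤ n
  | BV.b i => 1 ≤ i ∧ i ≤ n

/-- The edge relation of `𝔅_n`: travel, enter, skip, board, stay, leave edges,
the edge `(d,s)` and the self-loop `(s,s)`. -/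
def BEdge (n : ℕ) (u v : BV) : Prop :=
  (∃ i, 1 ≤ i ∧ i ≤ n ∧ u = BV.t ∧ v = BV.a i) ∨
  (∃ i, 1 ≤ i ∧ i ≤ n ∧ u = BV.a i ∧ v = BV.b i) ∨
  (∃ i, 1 ≤ i ∧ i ≤ n ∧ u = BV.a i ∧ v = aN n (i + 1)) ∨
  (∃ i, 1 ≤ i ∧ i ≤ n ∧ u = BV.a i ∧ v = BV.t) ∨
  (∃ i, 1 ≤ i ∧ i ≤ n ∧ u = BV.b i ∧ v = bN n (i + 1)) ∨
  (∃ i, 1 ≤ i ∧ i ≤ n ∧ u = BV.b i ∧ v = aN n (i + 1)) ∨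
  (u = BV.d ∧ v = BV.s) ∨ (u = BV.s ∧ v = BV.s)

/-- The reward function of `𝔅_n`: `r(enter i) = 2^i`, `r(stay i) = 3/4`,
`r(board i) = -2^i + 5/4`, and reward `0` on all other edges. -/
def rB (n : ℕ) (u v : BV) : ℚ :=
  match u, v with
  | BV.a i, BV.b j => if i = j then 2 ^ i else 0
  | BV.a i, BV.t => -(2 ^ i) + 5 / 4
  | BV.b i, BV.b j => if j = i + 1 then 3 / 4 else 0
  | BV.b i, BV.d => if i = n then 3 / 4 else 0
  | _, _ => 0

/-- A policy for `𝔅_n` chooses an outgoing edge at every vertex. -/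
def IsBPolicy (n : ℕ) (π : BV → BV) : Prop := ∀ u, IsBVertex n u → BEdge n u (π u)

/-- A policy is weak unichain if it reaches the sink `s` from every vertex. -/
def BWeakUnichain (n : ℕ) (π : BV → BV) : Prop :=
  ∀ u, IsBVertex n u → ∃ k, π^[k] u = BV.s

open Classical in
/-- The value of a vertex `v` w.r.t. a (weak unichain) policy `π`:
the sum of the rewards along the path that `π` takes from `v` to the sink `s`. -/
noncomputable def BVal (n : ℕ) (π : BV → BV) (v : BV) : ℚ :=
  if h : ∃ k, π^[k] v = BV.s then
    ∑ i ∈ Finset.range (Nat.find h), rB n (π^[i] v) (π^[i + 1] v)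
  else 0

/-- The reduced costs of the edge `(u,v)` w.r.t. the policy `π`. -/
noncomputable def zB (n : ℕ) (π : BV → BV) (u v : BV) : ℚ :=
  rB n u v + BVal n π v - BVal n π u

/-- The edge `(u,v)` is an improving switch for `π` if its reduced costs are positive. -/
def BImproving (n : ℕ) (π : BV → BV) (u v : BV) : Prop :=
  BEdge n u v ∧ 0 < zB n π u v

/-- The Bland numbering `𝒩_{𝔅_n}` of the edges of `𝔅_n`. -/
def NB (n : ℕ) (u v : BV) : ℕ :=
  match u, v with
  | BV.t, BV.a i => i
  | BV.a i, BV.b _ => n + 1 + 5 * (i - 1)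
  | BV.a i, BV.a _ => n + 2 + 5 * (i - 1)
  | BV.a i, BV.s => n + 2 + 5 * (i - 1)
  | BV.a i, BV.t => n + 3 + 5 * (i - 1)
  | BV.b i, BV.b _ => n + 4 + 5 * (i - 1)
  | BV.b i, BV.d => n + 4 + 5 * (i - 1)
  | BV.b i, BV.a _ => n + 5 + 5 * (i - 1)
  | BV.b i, BV.s => n + 5 + 5 * (i - 1)
  | BV.d, BV.s => 6 * n + 1
  | BV.s, BV.s => 6 * n + 2
  | _, _ => 0

/-- One step of Bland's policy iteration with edge numbering `N`:
apply the improving switch with the smallest number. -/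
def IsBlandStep (n : ℕ) (N : BV → BV → ℕ) (π π' : BV → BV) : Prop :=
  ∃ u v, BImproving n π u v ∧ (∀ u' v', BImproving n π u' v' → N u v ≤ N u' v') ∧
    π' = Function.update π u v

/-- `BlandReaches n N π ψ` says that Bland's policy iteration started at `π` visits `ψ`. -/
def BlandReaches (n : ℕ) (N : BV → BV → ℕ) : (BV → BV) → (BV → BV) → Prop :=
  Relation.ReflTransGen (IsBlandStep n N)

/-- The canonical policy `π_0` for `0`: `travel 1`, `skip i` and `leave i` are active. -/
def pi0 (n : ℕ) : BV → BV := fun u =>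
  match u with
  | BV.t => BV.a 1
  | BV.a i => aN n (i + 1)
  | BV.b i => aN n (i + 1)
  | BV.d => BV.s
  | BV.s => BV.s

/-- The optimal policy `π_*`: `travel 1`, `enter i` for all `i`, `leave j` for `j < n`,
and `stay n` are active. -/
def piStar (n : ℕ) : BV → BV := fun u =>
  match u with
  | BV.t => BV.a 1
  | BV.a i => BV.b i
  | BV.b i => if i = n then BV.d else BV.a (i + 1)
  | BV.d => BV.s
  | BV.s => BV.s

/-! ## Bits and canonical policies -/

/-- The least significant set bit `ℓ_1(x)` (1-based). -/
noncomputable def lsb (x : ℕ) : ℕ := sInf {i | 1 ≤ i ∧ Nat.testBit x (i - 1)}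

/-- The most significant set bit `m(x)` (1-based). -/
noncomputable def msb1 (x : ℕ) : ℕ := sSup {i | 1 ≤ i ∧ Nat.testBit x (i - 1)}

/-- The least unset bit `ℓ_0(x)` (1-based). -/
noncomputable def lzero (x : ℕ) : ℕ := sInf {i | 1 ≤ i ∧ ¬ Nat.testBit x (i - 1)}

/-- `L_i(x) = max { j ≤ i-2 | x_j = 1 or j = 1 }` (1-based bits). -/
noncomputable def Lfun (i x : ℕ) : ℕ :=
  sSup {j | 1 ≤ j ∧ j ≤ i - 2 ∧ (Nat.testBit x (j - 1) ∨ j = 1)}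

/-- `IsCanonical n x π` says that `π` is the canonical policy `π_x` for `x`. -/
noncomputable def IsCanonical (n x : ℕ) (π : BV → BV) : Prop :=
  IsBPolicy n π ∧
  if x = 0 then
    π BV.t = BV.a 1 ∧
      ∀ i, 1 ≤ i → i ≤ n → π (BV.a i) = aN n (i + 1) ∧ π (BV.b i) = aN n (i + 1)
  else
    π BV.t = BV.a (lsb x) ∧
    π (BV.b (msb1 x)) = aN n (msb1 x + 1) ∧
    (∀ i, msb1 x < i → i ≤ n → π (BV.a i) = aN n (i + 1) ∧ π (BV.b i) = aN n (i + 1)) ∧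
    ∀ i, 1 ≤ i → i ≤ n → Nat.testBit x (i - 1) →
      π (BV.a i) = BV.b i ∧
      (i = 2 → π (BV.b 1) = BV.a 2 ∧ (¬ Nat.testBit x 0 → π (BV.a 1) = BV.a 2)) ∧
      (3 ≤ i → Nat.testBit x (i - 2) → π (BV.b (i - 1)) = BV.a i) ∧
      (3 ≤ i → ¬ Nat.testBit x (i - 2) →
        π (BV.b (i - 1)) = BV.b i ∧ π (BV.a (i - 1)) = BV.a i ∧
        π (BV.b (i - 2)) = BV.a (i - 1) ∧
        (Lfun i x < i - 2 →
          ∀ j, Lfun i x + 1 ≤ j → j ≤ i - 2 →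
            π (BV.a j) = BV.t ∧ π (BV.b (j - 1)) = BV.b j) ∧
        (Lfun i x = 1 → ¬ Nat.testBit x 0 → π (BV.a 1) = BV.t))

/-- Activating a list of edges in a policy, from left to right. -/
def activateList (π : BV → BV) (L : List (BV × BV)) : BV → BV :=
  L.foldl (fun σ e => Function.update σ e.1 e.2) π

/-- The canonical phases w.r.t. an odd number `x` (with `ℓ := ℓ_0(x)`), as a list of edges
to be activated in order. -/
noncomputable def phaseList (n x : ℕ) : List (BV × BV) :=
  let ℓ := lzero x
  (if Nat.testBit x ℓ then [(BV.b ℓ, aN n (ℓ + 1))] else []) ++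
  (if Nat.testBit x ℓ ∨ msb1 x < ℓ then [(BV.b (ℓ - 1), BV.b ℓ)] else []) ++
  [(BV.a ℓ, BV.b ℓ), (BV.t, BV.a ℓ)] ++
  ((List.range (ℓ - 2)).map fun j => (BV.a (j + 1), BV.t)) ++
  [(BV.a (ℓ - 1), BV.a ℓ)] ++
  (((List.range (ℓ - 3)).reverse).map fun j => (BV.b (j + 1), BV.b (j + 2))) ++
  (if ℓ = 2 then [(BV.b 1, BV.a 2)] else [])

/-! ## The Markov decision process `𝔇_n` -/

/-- Vertices of `𝔇_n`: the original vertices (`base`), and for every edge `(v,w)` of `𝔅_n`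
other than the self-loop, the gadget vertices `x v w`, `y v w`, `z v w`. -/
inductive DV : Type where
  | base : BV → DV
  | x : BV → BV → DV
  | y : BV → BV → DV
  | z : BV → BV → DV
deriving DecidableEq

/-- The edges of `𝔅_n` that get replaced by gadgets (all edges except the self-loop `(s,s)`). -/
def DEdgePair (n : ℕ) (v w : BV) : Prop := BEdge n v w ∧ v ≠ BV.s

/-- The vertex set of `𝔇_n`. -/
def IsDVertex (n : ℕ) : DV → Prop
  | DV.base v => IsBVertex n v
  | DV.x v w => DEdgePair n v w
  | DV.y v w => DEdgePair n v w
  | DV.z v w => DEdgePair n v w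

/-- The agent vertices of `𝔇_n` (all vertices except the randomization vertices `y v w`). -/
def IsDAgent (n : ℕ) : DV → Prop
  | DV.base v => IsBVertex n v
  | DV.x v w => DEdgePair n v w
  | DV.y _ _ => False
  | DV.z v w => DEdgePair n v w

/-- The agent edges of `𝔇_n`. -/
def DEdge (n : ℕ) (u u' : DV) : Prop :=
  (∃ v w, DEdgePair n v w ∧
    ((u = DV.base v ∧ u' = DV.x v w) ∨ (u = DV.x v w ∧ u' = DV.base v) ∨
     (u = DV.x v w ∧ u' = DV.y v w) ∨ (u = DV.z v w ∧ u' = DV.base w))) ∨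
  (u = DV.base BV.s ∧ u' = DV.base BV.s)

/-- The reward function of `𝔇_n`: the edge `(z v w, w)` carries the reward of the original
edge `(v,w)`; all other agent edges have reward `0`. -/
def rD (n : ℕ) (u u' : DV) : ℚ :=
  match u, u' with
  | DV.z v w, DV.base w' => if w' = w then rB n v w else 0
  | _, _ => 0

/-- A policy for `𝔇_n` chooses an outgoing agent edge at every agent vertex. -/
def IsDPolicy (n : ℕ) (π : DV → DV) : Prop := ∀ u, IsDAgent n u → DEdge n u (π u)

/-- `IsDVal n p π V` says that `V` satisfies the Bellman equations characterizing the value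
function of the policy `π` for `𝔇_n` with probabilities `p`, with `V s = 0`. -/
def IsDVal (n : ℕ) (p : BV → ℚ) (π : DV → DV) (V : DV → ℚ) : Prop :=
  V (DV.base BV.s) = 0 ∧
  (∀ u, IsDAgent n u → V u = rD n u (π u) + V (π u)) ∧
  (∀ v w, DEdgePair n v w →
    V (DV.y v w) = p v * V (DV.z v w) + (1 - p v) * V (DV.base v))

open Classical in
/-- The value function of a (weak unichain) policy `π` for `𝔇_n`: the unique solution of the
Bellman equations (normalized to `0` outside the vertex set). -/
noncomputable def DVal (n : ℕ) (p : BV → ℚ) (π : DV → DV) : DV → ℚ :=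
  if h : ∃! V : DV → ℚ, IsDVal n p π V ∧ ∀ u, ¬ IsDVertex n u → V u = 0 then
    h.exists.choose
  else fun _ => 0

/-- The reduced costs of an agent edge `(u,u')` of `𝔇_n` w.r.t. the policy `π`. -/
noncomputable def zD (n : ℕ) (p : BV → ℚ) (π : DV → DV) (u u' : DV) : ℚ :=
  rD n u u' + DVal n p π u' - DVal n p π u

/-- An agent edge of `𝔇_n` is an improving switch if its reduced costs are positive. -/
def DImproving (n : ℕ) (p : BV → ℚ) (π : DV → DV) (u u' : DV) : Prop :=
  DEdge n u u' ∧ 0 < zD n p π u u'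

/-- One (agent or positive-probability randomization) step of the process `𝔇_n` under `π`. -/
def DStep (n : ℕ) (p : BV → ℚ) (π : DV → DV) (u u' : DV) : Prop :=
  (IsDAgent n u ∧ u' = π u) ∨
  (∃ v w, DEdgePair n v w ∧ u = DV.y v w ∧
    ((u' = DV.z v w ∧ 0 < p v) ∨ (u' = DV.base v ∧ 0 < 1 - p v)))

/-- A policy for `𝔇_n` is weak unichain if it reaches `s` with probability one from every
vertex, i.e. `s` is reachable via active/positive-probability steps from every vertex. -/
def DWeakUnichain (n : ℕ) (p : BV → ℚ) (π : DV → DV) : Prop :=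
  ∀ u, IsDVertex n u → Relation.ReflTransGen (DStep n p π) u (DV.base BV.s)

/-- The twin policy of a policy `π` for `𝔅_n`: every vertex `v ≠ s` is `π v`-oriented. -/
def twin (π : BV → BV) : DV → DV := fun u =>
  match u with
  | DV.base v => if v = BV.s then DV.base BV.s else DV.x v (π v)
  | DV.x v w => if w = π v then DV.y v w else DV.base v
  | DV.y v w => DV.y v w
  | DV.z _ w => DV.base w

/-- The vertex numbering `𝒩_V` of `𝔅_n`: the order `(t, a 1, b 1, a 2, b 2, …, a n, b n, d, s)`. -/
def NV (n : ℕ) : BV → ℕ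
  | BV.t => 1
  | BV.a i => 2 * i
  | BV.b i => 2 * i + 1
  | BV.d => 2 * n + 2
  | BV.s => 2 * n + 3

/-- The specific probabilities `p_v = 2^{-𝒩_V(v)·(n+5)}`. -/
noncomputable def pSpec (n : ℕ) (v : BV) : ℚ := (2 : ℚ) ^ (-((NV n v * (n + 5) : ℕ) : ℤ))

/-- The set `B(v)` of agent edges of `𝔇_n` belonging to the vertex `v`. -/
def Belongs (n : ℕ) (v : BV) (e : DV × DV) : Prop :=
  ∃ w, DEdgePair n v w ∧
    (e = (DV.x v w, DV.y v w) ∨ e = (DV.base v, DV.x v w) ∨ e = (DV.x v w, DV.base v))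

/-- Applying the improving switch `e` to the policy `π` yields `π'`. -/
def DApply (n : ℕ) (p : BV → ℚ) (π : DV → DV) (e : DV × DV) (π' : DV → DV) : Prop :=
  DImproving n p π e.1 e.2 ∧ π' = Function.update π e.1 e.2

/-- One step of Bland's policy iteration on `𝔇_n` with edge numbering `N`. -/
def IsBlandStepD (n : ℕ) (p : BV → ℚ) (N : DV → DV → ℕ) (π π' : DV → DV) : Prop :=
  ∃ u u', DImproving n p π u u' ∧ (∀ a b, DImproving n p π a b → N u u' ≤ N a b) ∧
    π' = Function.update π u u'

/-- One step of Dantzig's policy iteration on `𝔇_n`: apply an improving switch of maximal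
reduced costs. -/
def DantzigStep (n : ℕ) (p : BV → ℚ) (π π' : DV → DV) : Prop :=
  ∃ u u', DImproving n p π u u' ∧
    (∀ a b, DImproving n p π a b → zD n p π a b ≤ zD n p π u u') ∧
    π' = Function.update π u u'

/-- The finite set of vertices of `𝔅_n`, as a `Finset`. -/
noncomputable def BVSet (n : ℕ) : Finset BV :=
  {BV.t, BV.d, BV.s} ∪ (Finset.Icc 1 n).image BV.a ∪ (Finset.Icc 1 n).image BV.b

/-- The finite set of agent vertices of `𝔇_n`, as a `Finset`. -/
noncomputable def DAgentSet (n : ℕ) : Finset DV := by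
  classical
  exact ((BVSet n).image DV.base) ∪
    (((BVSet n ×ˢ BVSet n).filter fun e => DEdgePair n e.1 e.2).image fun e => DV.x e.1 e.2) ∪
    (((BVSet n ×ˢ BVSet n).filter fun e => DEdgePair n e.1 e.2).image fun e => DV.z e.1 e.2)

/-- The objective of the Largest Increase rule: the sum of the values of all agent vertices. -/
noncomputable def LIobj (n : ℕ) (p : BV → ℚ) (π : DV → DV) : ℚ :=
  ∑ u ∈ DAgentSet n, DVal n p π u

/-- One step of the Largest Increase policy iteration on `𝔇_n`: apply an improving switch
maximizing the sum of all agent vertex values of the resulting policy. -/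
def LIStep (n : ℕ) (p : BV → ℚ) (π π' : DV → DV) : Prop :=
  ∃ u u', DImproving n p π u u' ∧
    (∀ a b, DImproving n p π a b →
      LIobj n p (Function.update π a b) ≤ LIobj n p (Function.update π u u')) ∧
    π' = Function.update π u u'

/-- `N` is a Bland numbering `𝒩_{𝔇_n}` for `𝔇_n`: it is injective on agent edges, the edges
`(x v w, v)` all come first, within each gadget `(x v w, y v w)` precedes `(v, x v w)`,
the gadget blocks are ordered according to `𝒩_{𝔅_n}`, and the self-loop comes last. -/
def IsDBlandNumbering (n : ℕ) (N : DV → DV → ℕ) : Prop :=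
  (∀ u₁ u₂ u₁' u₂', DEdge n u₁ u₂ → DEdge n u₁' u₂' → N u₁ u₂ = N u₁' u₂' →
    u₁ = u₁' ∧ u₂ = u₂') ∧
  (∀ v w v' w', DEdgePair n v w → DEdgePair n v' w' →
    N (DV.x v w) (DV.base v) < N (DV.x v' w') (DV.y v' w')) ∧
  (∀ v w, DEdgePair n v w → N (DV.x v w) (DV.y v w) < N (DV.base v) (DV.x v w)) ∧
  (∀ v w v' w', DEdgePair n v w → DEdgePair n v' w' → NB n v w < NB n v' w' →
    N (DV.base v) (DV.x v w) < N (DV.x v' w') (DV.y v' w')) ∧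
  (∀ v w, DEdgePair n v w → N (DV.base v) (DV.x v w) < N (DV.base BV.s) (DV.base BV.s))

/-! ## Basic facts -/

/-- Reachability under a policy. -/
def Rch (π : BV → BV) (x y : BV) : Prop := ∃ k, π^[k] x = y

/-- Policies that are weak unichain. -/
structure OKP (n : ℕ) (π : BV → BV) : Prop where
  pol : IsBPolicy n π
  wu : BWeakUnichain n π

lemma Rch.refl (π : BV → BV) (x : BV) : Rch π x x := ⟨0, rfl⟩

lemma Rch.head {π : BV → BV} {x y : BV} (h : Rch π (π x) y) : Rch π x y := by
  obtain ⟨k, hk⟩ := h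
  exact ⟨k + 1, by rw [Function.iterate_succ_apply]; exact hk⟩

lemma Rch.head' {π : BV → BV} {x x' y : BV} (e : π x = x') (h : Rch π x' y) : Rch π x y := by
  subst e
  exact h.head

lemma Rch.trans {π : BV → BV} {x y z : BV} (h : Rch π x y) (h' : Rch π y z) : Rch π x z := by
  obtain ⟨k, rfl⟩ := h
  obtain ⟨l, rfl⟩ := h'
  exact ⟨l + k, by rw [Function.iterate_add_apply]⟩

lemma Rch.cases_last {π : BV → BV} {x y : BV} (h : Rch π x y) :
    x = y ∨ ∃ w, Rch π x w ∧ π w = y := by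
  obtain ⟨k, hk⟩ := h
  cases k with
  | zero => exact Or.inl hk
  | succ k =>
    right
    exact ⟨π^[k] x, ⟨k, rfl⟩, by rw [← hk, Function.iterate_succ_apply']⟩

lemma Rch.rec' {n : ℕ} {π : BV → BV} (hp : ∀ x, IsBVertex n x → IsBVertex n (π x))
    {y : BV} (P : BV → Prop) (h0 : P y)
    (hs : ∀ x, IsBVertex n x → x ≠ y → Rch π (π x) y → P (π x) → P x) :
    ∀ x, IsBVertex n x → Rch π x y → P x := by
  rintro x hx ⟨k, hk⟩
  induction k generalizing x with
  | zero =>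
    simp at hk
    subst hk
    exact h0
  | succ k ih =>
    by_cases hxy : x = y
    · subst hxy; exact h0
    · rw [Function.iterate_succ_apply] at hk
      exact hs x hx hxy ⟨k, hk⟩ (ih _ (hp x hx) hk)

lemma aN_vertex {n i : ℕ} (h1 : 1 ≤ i) (h2 : i ≤ n + 1) : IsBVertex n (aN n i) := by
  unfold aN
  split_ifs <;> simp [IsBVertex]; omega

lemma bN_vertex {n i : ℕ} (h1 : 1 ≤ i) (h2 : i ≤ n + 1) : IsBVertex n (bN n i) := by
  unfold bN
  split_ifs <;> simp [IsBVertex]; omega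

lemma aN_eq {n i : ℕ} (h : i ≤ n) : aN n i = BV.a i := by
  unfold aN; rw [if_neg (by omega)]

lemma bN_eq {n i : ℕ} (h : i ≤ n) : bN n i = BV.b i := by
  unfold bN; rw [if_neg (by omega)]

lemma edge_vertex {n : ℕ} {u v : BV} (h : BEdge n u v) : IsBVertex n u ∧ IsBVertex n v := by
  rcases h with ⟨i, h1, h2, rfl, rfl⟩ | ⟨i, h1, h2, rfl, rfl⟩ | ⟨i, h1, h2, rfl, rfl⟩ |
    ⟨i, h1, h2, rfl, rfl⟩ | ⟨i, h1, h2, rfl, rfl⟩ | ⟨i, h1, h2, rfl, rfl⟩ | ⟨rfl, rfl⟩ | ⟨rfl, rfl⟩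
  · exact ⟨trivial, h1, h2⟩
  · exact ⟨⟨h1, h2⟩, h1, h2⟩
  · exact ⟨⟨h1, h2⟩, aN_vertex (by omega) (by omega)⟩
  · exact ⟨⟨h1, h2⟩, trivial⟩
  · exact ⟨⟨h1, h2⟩, bN_vertex (by omega) (by omega)⟩
  · exact ⟨⟨h1, h2⟩, aN_vertex (by omega) (by omega)⟩
  · exact ⟨trivial, trivial⟩
  · exact ⟨trivial, trivial⟩

lemma OKP.vert {n : ℕ} {π : BV → BV} (h : OKP n π) (x : BV) (hx : IsBVertex n x) :
    IsBVertex n (π x) := (edge_vertex (h.pol x hx)).2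

lemma edge_a {n i : ℕ} {v : BV} (h : BEdge n (BV.a i) v) :
    v = BV.b i ∨ v = aN n (i + 1) ∨ v = BV.t := by
  rcases h with ⟨j, h1, h2, h, h'⟩ | ⟨j, h1, h2, h, h'⟩ | ⟨j, h1, h2, h, h'⟩ |
    ⟨j, h1, h2, h, h'⟩ | ⟨j, h1, h2, h, h'⟩ | ⟨j, h1, h2, h, h'⟩ | ⟨h, h'⟩ | ⟨h, h'⟩ <;>
    cases h <;> simp [h']

lemma edge_b {n i : ℕ} {v : BV} (h : BEdge n (BV.b i) v) :
    v = bN n (i + 1) ∨ v = aN n (i + 1) := by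
  rcases h with ⟨j, h1, h2, h, h'⟩ | ⟨j, h1, h2, h, h'⟩ | ⟨j, h1, h2, h, h'⟩ |
    ⟨j, h1, h2, h, h'⟩ | ⟨j, h1, h2, h, h'⟩ | ⟨j, h1, h2, h, h'⟩ | ⟨h, h'⟩ | ⟨h, h'⟩ <;>
    cases h <;> simp [h']

lemma edge_t {n : ℕ} {v : BV} (h : BEdge n BV.t v) :
    ∃ i, 1 ≤ i ∧ i ≤ n ∧ v = BV.a i := by
  rcases h with ⟨j, h1, h2, h, h'⟩ | ⟨j, h1, h2, h, h'⟩ | ⟨j, h1, h2, h, h'⟩ |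
    ⟨j, h1, h2, h, h'⟩ | ⟨j, h1, h2, h, h'⟩ | ⟨j, h1, h2, h, h'⟩ | ⟨h, h'⟩ | ⟨h, h'⟩ <;>
    cases h
  exact ⟨j, h1, h2, h'⟩

lemma edge_d {n : ℕ} {v : BV} (h : BEdge n BV.d v) : v = BV.s := by
  rcases h with ⟨j, h1, h2, h, h'⟩ | ⟨j, h1, h2, h, h'⟩ | ⟨j, h1, h2, h, h'⟩ |
    ⟨j, h1, h2, h, h'⟩ | ⟨j, h1, h2, h, h'⟩ | ⟨j, h1, h2, h, h'⟩ | ⟨h, h'⟩ | ⟨h, h'⟩ <;>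
    cases h
  exact h'

lemma edge_s {n : ℕ} {v : BV} (h : BEdge n BV.s v) : v = BV.s := by
  rcases h with ⟨j, h1, h2, h, h'⟩ | ⟨j, h1, h2, h, h'⟩ | ⟨j, h1, h2, h, h'⟩ |
    ⟨j, h1, h2, h, h'⟩ | ⟨j, h1, h2, h, h'⟩ | ⟨j, h1, h2, h, h'⟩ | ⟨h, h'⟩ | ⟨h, h'⟩ <;>
    cases h
  exact h'

lemma OKP.s {n : ℕ} {π : BV → BV} (h : OKP n π) : π BV.s = BV.s := edge_s (h.pol BV.s trivial)

/-! Rewards and numbers of the edges. -/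

lemma rB_enter (n i : ℕ) : rB n (BV.a i) (BV.b i) = 2 ^ i := by simp [rB]
lemma rB_skip (n i : ℕ) : rB n (BV.a i) (aN n (i + 1)) = 0 := by
  unfold aN; split_ifs <;> simp [rB]
lemma rB_board (n i : ℕ) : rB n (BV.a i) BV.t = -(2 ^ i) + 5 / 4 := by simp [rB]
lemma rB_stay (n i : ℕ) : rB n (BV.b i) (bN n (i + 1)) = 3 / 4 := by
  unfold bN; split_ifs with h
  · have : i = n := by omega
    simp [rB, this]
  · simp [rB]
lemma rB_leave (n i : ℕ) : rB n (BV.b i) (aN n (i + 1)) = 0 := by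
  unfold aN; split_ifs <;> simp [rB]
lemma rB_travel (n i : ℕ) : rB n BV.t (BV.a i) = 0 := by simp [rB]

lemma NB_skip (n i : ℕ) : NB n (BV.a i) (aN n (i + 1)) = n + 2 + 5 * (i - 1) := by
  unfold aN; split_ifs <;> simp [NB]
lemma NB_stay (n i : ℕ) : NB n (BV.b i) (bN n (i + 1)) = n + 4 + 5 * (i - 1) := by
  unfold bN; split_ifs <;> simp [NB]
lemma NB_leave (n i : ℕ) : NB n (BV.b i) (aN n (i + 1)) = n + 5 + 5 * (i - 1) := by
  unfold aN; split_ifs <;> simp [NB]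

/-! Bellman equations. -/

lemma BVal_s (n : ℕ) (π : BV → BV) : BVal n π BV.s = 0 := by
  unfold BVal
  have h : ∃ k, π^[k] BV.s = BV.s := ⟨0, rfl⟩
  rw [dif_pos h]
  have : Nat.find h = 0 := by rw [Nat.find_eq_zero]; rfl
  rw [this]; simp

lemma BVal_step (n : ℕ) (π : BV → BV) (x : BV) (hx : x ≠ BV.s) (h : Rch π x BV.s) :
    BVal n π x = rB n x (π x) + BVal n π (π x) := by
  classical
  have h' : ∃ k, π^[k] (π x) = BV.s := by
    obtain ⟨k, hk⟩ := h
    cases k with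
    | zero => exact absurd hk hx
    | succ k => exact ⟨k, by rw [← Function.iterate_succ_apply]; exact hk⟩
  have h1 : ∃ k, π^[k] x = BV.s := h
  have h2 : ∃ k, π^[k + 1] x = BV.s := h'
  unfold BVal
  rw [dif_pos h1, dif_pos h']
  have e : Nat.find h1 = Nat.find h' + 1 := by
    have := Nat.find_comp_succ h1 h2 (by simpa using hx)
    rw [this]
    rfl
  have e2 : ∀ (i j : ℕ), i = j → ∑ k ∈ Finset.range i, rB n (π^[k] x) (π^[k + 1] x)
    = ∑ k ∈ Finset.range j, rB n (π^[k] x) (π^[k + 1] x) := by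
    rintro i j rfl; rfl
  have := e2 _ _ e
  rw [Finset.sum_range_succ'] at this
  simp only [Function.iterate_succ_apply, Function.iterate_zero, id] at this ⊢
  convert this using 1
  rw [add_comm]

lemma OKP.bell {n : ℕ} {π : BV → BV} (h : OKP n π) (x : BV) (hx : IsBVertex n x) :
    BVal n π x = rB n x (π x) + BVal n π (π x) := by
  by_cases hs : x = BV.s
  · subst hs
    rw [h.s, BVal_s]; simp [rB]
  · exact BVal_step n π x hs (h.wu x hx)

/-- A potential showing that there are no cycles of positive reward. -/
def Pot (n : ℕ) : BV → ℚ
  | BV.t => -2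
  | BV.s => -(2 ^ (n + 1)) - 2
  | BV.d => -(2 ^ (n + 1)) - 1
  | BV.a i => -(2 ^ i)
  | BV.b i => -(2 ^ (i + 1))

lemma Pot_aN (n i : ℕ) : Pot n (aN n i) ≤ -(2 ^ i) := by
  unfold aN; split_ifs with h
  · subst h; simp [Pot]
  · simp [Pot]

lemma Pot_bN (n i : ℕ) (hi : 1 ≤ i) : Pot n (bN n i) ≤ -(2 ^ i) - 1 := by
  unfold bN; split_ifs with h
  · subst h; simp [Pot]
  · simp only [Pot]
    have : (1 : ℚ) ≤ 2 ^ i := one_le_pow₀ (by norm_num)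
    rw [pow_succ]; linarith

lemma two_le_pow {i : ℕ} (h : 1 ≤ i) : (2 : ℚ) ≤ 2 ^ i := by
  calc (2 : ℚ) = 2 ^ 1 := by norm_num
    _ ≤ 2 ^ i := pow_le_pow_right₀ (by norm_num) h

lemma Pot_edge {n : ℕ} {u v : BV} (h : BEdge n u v) : rB n u v + Pot n v ≤ Pot n u := by
  rcases h with ⟨i, h1, h2, rfl, rfl⟩ | ⟨i, h1, h2, rfl, rfl⟩ | ⟨i, h1, h2, rfl, rfl⟩ |
    ⟨i, h1, h2, rfl, rfl⟩ | ⟨i, h1, h2, rfl, rfl⟩ | ⟨i, h1, h2, rfl, rfl⟩ | ⟨rfl, rfl⟩ | ⟨rfl, rfl⟩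
  · rw [rB_travel]; simp only [Pot]
    have := two_le_pow h1; linarith
  · rw [rB_enter]; simp only [Pot]; rw [pow_succ]; linarith
  · rw [rB_skip]
    have := Pot_aN n (i + 1)
    have h2 := two_le_pow h1
    rw [pow_succ] at this
    change 0 + _ ≤ -((2 : ℚ) ^ i)
    linarith
  · rw [rB_board]; simp only [Pot]; linarith
  · rw [rB_stay]
    have := Pot_bN n (i + 1) (by omega)
    change 3 / 4 + _ ≤ -((2 : ℚ) ^ (i + 1))
    linarith
  · rw [rB_leave]
    have := Pot_aN n (i + 1)
    change 0 + _ ≤ -((2 : ℚ) ^ (i + 1))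
    linarith
  · simp only [rB, Pot]; linarith
  · simp [rB, Pot]

lemma OKP.rch_pot {n : ℕ} {π : BV → BV} (h : OKP n π) {y : BV} (x : BV) (hx : IsBVertex n x)
    (hr : Rch π x y) : BVal n π x - BVal n π y ≤ Pot n x - Pot n y := by
  refine Rch.rec' h.vert (fun x => BVal n π x - BVal n π y ≤ Pot n x - Pot n y) (by simp) ?_ x hx hr
  intro x hx _ _ ih
  have h1 := Pot_edge (h.pol x hx)
  have h2 := h.bell x hx
  linarith

/-- No cycles apart from the sink. -/
lemma OKP.nocycle {n : ℕ} {π : BV → BV} (h : OKP n π) {u : BV} (hu : IsBVertex n u)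
    (hs : u ≠ BV.s) (hr : Rch π (π u) u) : False := by
  obtain ⟨k, hk⟩ := hr
  rw [← Function.iterate_succ_apply] at hk
  obtain ⟨q, hq⟩ := h.wu u hu
  have e1 : π^[(k + 1) * q] u = u := by
    rw [Function.iterate_mul]
    exact Function.iterate_fixed hk q
  have e2 : π^[(k + 1) * q] u = BV.s := by
    have : (k + 1) * q = k * q + q := by ring
    rw [this, Function.iterate_add_apply, hq]
    exact Function.iterate_fixed h.s _
  exact hs (e1.symm.trans e2)

open Classical in
/-- The value as a function of the trajectory. -/
noncomputable def BValF (n : ℕ) (f : ℕ → BV) : ℚ :=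
  if h : ∃ k, f k = BV.s then ∑ i ∈ Finset.range (Nat.find h), rB n (f i) (f (i + 1)) else 0

lemma BVal_congr (n : ℕ) {π σ : BV → BV} {w : BV} (h : ∀ k, π^[k] w = σ^[k] w) :
    BVal n π w = BVal n σ w := by
  have e : (fun k => π^[k] w) = (fun k => σ^[k] w) := funext h
  change BValF n (fun k => π^[k] w) = BValF n (fun k => σ^[k] w)
  rw [e]

/-- The effect of an improving switch. -/
lemma OKP.switch {n : ℕ} {π : BV → BV} (h : OKP n π) {u v : BV} (hi : BImproving n π u v) :
    OKP n (Function.update π u v) ∧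
    (∀ w, IsBVertex n w → Rch π w u →
      BVal n (Function.update π u v) w = BVal n π w + zB n π u v) ∧
    (∀ w, ¬ Rch π w u → BVal n (Function.update π u v) w = BVal n π w) := by
  obtain ⟨he, hz⟩ := hi
  obtain ⟨hu, hv⟩ := edge_vertex he
  have hvu : ¬ Rch π v u := by
    intro hr
    have h1 := h.rch_pot v hv hr
    have h2 := Pot_edge he
    unfold zB at hz
    linarith
  have key : ∀ w, ¬ Rch π w u → ∀ k, (Function.update π u v)^[k] w = π^[k] w := by
    intro w hw k
    induction k with
    | zero => rfl
    | succ k ih =>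
      rw [Function.iterate_succ_apply', Function.iterate_succ_apply', ih]
      apply Function.update_of_ne
      exact fun hh => hw ⟨k, hh⟩
  have hV : ∀ w, ¬ Rch π w u → BVal n (Function.update π u v) w = BVal n π w := by
    intro w hw
    exact BVal_congr n (key w hw)
  have hR : ∀ w, IsBVertex n w → ¬ Rch π w u → Rch (Function.update π u v) w BV.s := by
    intro w hw hwu
    obtain ⟨k, hk⟩ := h.wu w hw
    exact ⟨k, by rw [key w hwu]; exact hk⟩
  have huu : Function.update π u v u = v := Function.update_self ..
  have hpol : IsBPolicy n (Function.update π u v) := by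
    intro w hw
    by_cases hwu : w = u
    · subst hwu; rw [huu]; exact he
    · rw [Function.update_of_ne hwu]; exact h.pol w hw
  have hwu : BWeakUnichain n (Function.update π u v) := by
    intro w hw
    by_cases hr : Rch π w u
    · refine Rch.rec' h.vert (fun w => Rch (Function.update π u v) w BV.s) ?_ ?_ w hw hr
      · exact Rch.head' huu (hR v hv hvu)
      · intro x hx hxu _ ih
        exact Rch.head' (Function.update_of_ne hxu ..) ih
    · exact hR w hw hr
  have hok : OKP n (Function.update π u v) := ⟨hpol, hwu⟩
  refine ⟨hok, ?_, hV⟩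
  intro w hw hr
  refine Rch.rec' h.vert (fun w => BVal n (Function.update π u v) w = BVal n π w + zB n π u v)
    ?_ ?_ w hw hr
  · rw [hok.bell u hu, huu, hV v hvu]
    unfold zB; ring
  · intro x hx hxu _ ih
    have e : Function.update π u v x = π x := Function.update_of_ne hxu ..
    rw [hok.bell x hx, e, ih, h.bell x hx]
    ring

/-- Levels. -/
def lev (n : ℕ) : BV → ℕ
  | BV.t => 0
  | BV.s => n + 1
  | BV.d => n + 1
  | BV.a i => i
  | BV.b i => i

lemma lev_aN (n i : ℕ) : lev n (aN n i) = i := by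
  unfold aN; split_ifs with h <;> simp [lev, h]

lemma lev_bN (n i : ℕ) : lev n (bN n i) = i := by
  unfold bN; split_ifs with h <;> simp [lev, h]

lemma lev_edge {n : ℕ} {u v : BV} (h : BEdge n u v) (hu : u ≠ BV.t) (hv : v ≠ BV.t) :
    lev n u ≤ lev n v := by
  rcases h with ⟨i, h1, h2, rfl, rfl⟩ | ⟨i, h1, h2, rfl, rfl⟩ | ⟨i, h1, h2, rfl, rfl⟩ |
    ⟨i, h1, h2, rfl, rfl⟩ | ⟨i, h1, h2, rfl, rfl⟩ | ⟨i, h1, h2, rfl, rfl⟩ | ⟨rfl, rfl⟩ | ⟨rfl, rfl⟩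
  · exact absurd rfl hu
  · simp [lev]
  · rw [lev_aN]; simp [lev]
  · exact absurd rfl hv
  · rw [lev_bN]; simp [lev]
  · rw [lev_aN]; simp [lev]
  · simp [lev]
  · simp [lev]

/-- Lower levels can only be reached through `t`. -/
lemma OKP.lev_rch {n : ℕ} {π : BV → BV} (h : OKP n π) {x y : BV} (hx : IsBVertex n x)
    (hr : Rch π x y) (hl : lev n y < lev n x) : Rch π x BV.t ∧ Rch π BV.t y := by
  refine Rch.rec' h.vert (fun x => lev n y < lev n x → Rch π x BV.t ∧ Rch π BV.t y)
    (by omega) ?_ x hx hr hl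
  intro x hx _ hr ih hl
  by_cases h1 : x = BV.t
  · subst h1; exact ⟨Rch.refl _ _, hr.head⟩
  · by_cases h2 : π x = BV.t
    · exact ⟨Rch.head' h2 (Rch.refl _ _), h2 ▸ hr⟩
    · have := lev_edge (h.pol x hx) h1 h2
      obtain ⟨h3, h4⟩ := ih (by omega)
      exact ⟨h3.head, h4⟩

/-! ## Values of the named vertices -/

/-- Value of `t`. -/
noncomputable def Tv (n : ℕ) (π : BV → BV) : ℚ := BVal n π BV.t
/-- Value of `a k`. -/
noncomputable def Av (n : ℕ) (π : BV → BV) (k : ℕ) : ℚ := BVal n π (aN n k)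
/-- Value of `b k`. -/
noncomputable def Bv (n : ℕ) (π : BV → BV) (k : ℕ) : ℚ := BVal n π (bN n k)

lemma Av_eq {n k : ℕ} (π : BV → BV) (h : k ≤ n) : Av n π k = BVal n π (BV.a k) := by
  unfold Av; rw [aN_eq h]
lemma Bv_eq {n k : ℕ} (π : BV → BV) (h : k ≤ n) : Bv n π k = BVal n π (BV.b k) := by
  unfold Bv; rw [bN_eq h]

section vals
variable {n : ℕ} {π : BV → BV}

lemma OKP.T_travel (h : OKP n π) {k : ℕ} (hk : k ≤ n) (e : π BV.t = BV.a k) :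
    Tv n π = Av n π k := by
  rw [Av_eq π hk]; unfold Tv
  rw [h.bell BV.t trivial, e, rB_travel]; ring

lemma OKP.A_enter (h : OKP n π) {k : ℕ} (h1 : 1 ≤ k) (h2 : k ≤ n) (e : π (BV.a k) = BV.b k) :
    Av n π k = 2 ^ k + Bv n π k := by
  rw [Av_eq π h2, Bv_eq π h2, h.bell (BV.a k) ⟨h1, h2⟩, e, rB_enter]

lemma OKP.A_skip (h : OKP n π) {k : ℕ} (h1 : 1 ≤ k) (h2 : k ≤ n)
    (e : π (BV.a k) = aN n (k + 1)) : Av n π k = Av n π (k + 1) := by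
  rw [Av_eq π h2, h.bell (BV.a k) ⟨h1, h2⟩, e, rB_skip]; simp [Av]

lemma OKP.A_board (h : OKP n π) {k : ℕ} (h1 : 1 ≤ k) (h2 : k ≤ n)
    (e : π (BV.a k) = BV.t) : Av n π k = Tv n π - 2 ^ k + 5 / 4 := by
  rw [Av_eq π h2, h.bell (BV.a k) ⟨h1, h2⟩, e, rB_board]; simp only [Tv]; ring

lemma OKP.B_stay (h : OKP n π) {k : ℕ} (h1 : 1 ≤ k) (h2 : k ≤ n)
    (e : π (BV.b k) = bN n (k + 1)) : Bv n π k = 3 / 4 + Bv n π (k + 1) := by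
  rw [Bv_eq π h2, h.bell (BV.b k) ⟨h1, h2⟩, e, rB_stay]; simp only [Bv]

lemma OKP.B_leave (h : OKP n π) {k : ℕ} (h1 : 1 ≤ k) (h2 : k ≤ n)
    (e : π (BV.b k) = aN n (k + 1)) : Bv n π k = Av n π (k + 1) := by
  rw [Bv_eq π h2, h.bell (BV.b k) ⟨h1, h2⟩, e, rB_leave]; simp [Av]

lemma imp_travel {k : ℕ} (h1 : 1 ≤ k) (h2 : k ≤ n) :
    BImproving n π BV.t (BV.a k) ↔ Tv n π < Av n π k := by
  unfold BImproving zB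
  rw [rB_travel, Av_eq π h2, and_iff_right 
    (show BEdge n BV.t (BV.a k) from Or.inl ⟨k, h1, h2, rfl, rfl⟩)]
  unfold Tv
  constructor <;> intro h <;> linarith

lemma imp_enter {k : ℕ} (h1 : 1 ≤ k) (h2 : k ≤ n) :
    BImproving n π (BV.a k) (BV.b k) ↔ Av n π k < 2 ^ k + Bv n π k := by
  unfold BImproving zB
  rw [rB_enter, Av_eq π h2, Bv_eq π h2,
    and_iff_right 
    (show BEdge n (BV.a k) (BV.b k) from Or.inr (Or.inl ⟨k, h1, h2, rfl, rfl⟩))]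
  constructor <;> intro h <;> linarith

lemma imp_skip {k : ℕ} (h1 : 1 ≤ k) (h2 : k ≤ n) :
    BImproving n π (BV.a k) (aN n (k + 1)) ↔ Av n π k < Av n π (k + 1) := by
  unfold BImproving zB
  rw [rB_skip, Av_eq π h2,
    and_iff_right 
    (show BEdge n (BV.a k) (aN n (k + 1)) from Or.inr (Or.inr (Or.inl ⟨k, h1, h2, rfl, rfl⟩)))]
  unfold Av
  constructor <;> intro h <;> linarith

lemma imp_board {k : ℕ} (h1 : 1 ≤ k) (h2 : k ≤ n) :
    BImproving n π (BV.a k) BV.t ↔ Av n π k < Tv n π - 2 ^ k + 5 / 4 := by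
  unfold BImproving zB
  rw [rB_board, Av_eq π h2,
    and_iff_right 
    (show BEdge n (BV.a k) BV.t from Or.inr (Or.inr (Or.inr (Or.inl ⟨k, h1, h2, rfl, rfl⟩))))]
  unfold Tv
  constructor <;> intro h <;> linarith

lemma imp_stay {k : ℕ} (h1 : 1 ≤ k) (h2 : k ≤ n) :
    BImproving n π (BV.b k) (bN n (k + 1)) ↔ Bv n π k < 3 / 4 + Bv n π (k + 1) := by
  unfold BImproving zB
  rw [rB_stay, Bv_eq π h2,
    and_iff_right 
    (show BEdge n (BV.b k) (bN n (k + 1)) from Or.inr (Or.inr (Or.inr (Or.inr (Or.inl ⟨k, h1, h2, rfl, rfl⟩)))))]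
  unfold Bv
  constructor <;> intro h <;> linarith

lemma imp_leave {k : ℕ} (h1 : 1 ≤ k) (h2 : k ≤ n) :
    BImproving n π (BV.b k) (aN n (k + 1)) ↔ Bv n π k < Av n π (k + 1) := by
  unfold BImproving zB
  rw [rB_leave, Bv_eq π h2,
    and_iff_right 
    (show BEdge n (BV.b k) (aN n (k + 1)) from Or.inr (Or.inr (Or.inr (Or.inr (Or.inr (Or.inl ⟨k, h1, h2, rfl, rfl⟩))))))]
  unfold Av
  constructor <;> intro h <;> linarith

/-- The possible improving switches, with their numbers. -/
lemma OKP.imp_cases (h : OKP n π) {u v : BV} (hi : BImproving n π u v) :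
    ∃ k, 1 ≤ k ∧ k ≤ n ∧
      ((u = BV.t ∧ v = BV.a k ∧ NB n u v = k ∧ Tv n π < Av n π k) ∨
      (u = BV.a k ∧ v = BV.b k ∧ NB n u v + 4 = n + 5 * k ∧ Av n π k < 2 ^ k + Bv n π k) ∨
      (u = BV.a k ∧ v = aN n (k + 1) ∧ NB n u v + 3 = n + 5 * k ∧ Av n π k < Av n π (k + 1)) ∨
      (u = BV.a k ∧ v = BV.t ∧ NB n u v + 2 = n + 5 * k ∧
        Av n π k < Tv n π - 2 ^ k + 5 / 4) ∨
      (u = BV.b k ∧ v = bN n (k + 1) ∧ NB n u v + 1 = n + 5 * k ∧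
        Bv n π k < 3 / 4 + Bv n π (k + 1)) ∨
      (u = BV.b k ∧ v = aN n (k + 1) ∧ NB n u v = n + 5 * k ∧ Bv n π k < Av n π (k + 1))) := by
  have hi' := hi
  obtain ⟨he, hz⟩ := hi
  rcases he with ⟨i, h1, h2, rfl, rfl⟩ | ⟨i, h1, h2, rfl, rfl⟩ | ⟨i, h1, h2, rfl, rfl⟩ |
    ⟨i, h1, h2, rfl, rfl⟩ | ⟨i, h1, h2, rfl, rfl⟩ | ⟨i, h1, h2, rfl, rfl⟩ | ⟨rfl, rfl⟩ | ⟨rfl, rfl⟩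
  · exact ⟨i, h1, h2, Or.inl ⟨rfl, rfl, rfl, (imp_travel h1 h2).1 hi'⟩⟩
  · refine ⟨i, h1, h2, Or.inr (Or.inl ⟨rfl, rfl, ?_, (imp_enter h1 h2).1 hi'⟩)⟩
    simp only [NB]; omega
  · refine ⟨i, h1, h2, Or.inr (Or.inr (Or.inl ⟨rfl, rfl, ?_, (imp_skip h1 h2).1 hi'⟩))⟩
    rw [NB_skip]; omega
  · refine ⟨i, h1, h2, Or.inr (Or.inr (Or.inr (Or.inl ⟨rfl, rfl, ?_, (imp_board h1 h2).1 hi'⟩)))⟩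
    simp only [NB]; omega
  · refine ⟨i, h1, h2, Or.inr (Or.inr (Or.inr (Or.inr (Or.inl
      ⟨rfl, rfl, ?_, (imp_stay h1 h2).1 hi'⟩))))⟩
    rw [NB_stay]; omega
  · refine ⟨i, h1, h2, Or.inr (Or.inr (Or.inr (Or.inr (Or.inr
      ⟨rfl, rfl, ?_, (imp_leave h1 h2).1 hi'⟩))))⟩
    rw [NB_leave]; omega
  · exfalso
    have := h.bell BV.d trivial
    rw [edge_d (h.pol BV.d trivial)] at this
    unfold zB at hz
    linarith
  · exfalso
    unfold zB at hz
    rw [BVal_s] at hz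
    simp [rB] at hz

/-- Vertices reaching `t` are at most as good as `t`. -/
lemma OKP.A_le_of_rch (h : OKP n π) {k : ℕ} (h1 : 1 ≤ k) (h2 : k ≤ n + 1)
    (hr : Rch π (aN n k) BV.t) : Av n π k ≤ Tv n π := by
  have h3 := h.rch_pot _ (aN_vertex h1 h2) hr
  have h4 := Pot_aN n k
  have h5 := two_le_pow h1
  have h6 : Pot n BV.t = -2 := rfl
  unfold Av Tv
  linarith

/-- Applying a travel switch. -/
lemma OKP.travel_step (h : OKP n π) {i : ℕ} (h1 : 1 ≤ i) (h2 : i ≤ n)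
    (hi : BImproving n π BV.t (BV.a i)) :
    OKP n (Function.update π BV.t (BV.a i)) ∧
    ∀ k, 1 ≤ k → k ≤ n + 1 → (k ≠ i → Av n π k ≤ Tv n π) →
      Av n (Function.update π BV.t (BV.a i)) k ≤ Tv n (Function.update π BV.t (BV.a i)) := by
  obtain ⟨hok, hV1, hV2⟩ := h.switch hi
  refine ⟨hok, ?_⟩
  intro k hk1 hk2 hle
  by_cases hki : k = i
  · subst hki
    rw [hok.T_travel h2 (Function.update_self ..)]
  · have hle := hle hki
    have hT := hV1 BV.t trivial (Rch.refl _ _)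
    have hz := hi.2
    by_cases hr : Rch π (aN n k) BV.t
    · have hA := hV1 _ (aN_vertex hk1 hk2) hr
      unfold Av Tv at *
      linarith
    · have hA := hV2 _ hr
      unfold Av Tv at *
      linarith

/-- Switches below the level do not create improving travel switches. -/
lemma OKP.keep (h : OKP n π) {u v : BV} (hi : BImproving n π u v) (ht : ¬ Rch π BV.t u)
    {k : ℕ} (h1 : 1 ≤ k) (h2 : k ≤ n + 1) (hl : lev n u < k) (hle : Av n π k ≤ Tv n π) :
    Av n (Function.update π u v) k ≤ Tv n (Function.update π u v) := by
  obtain ⟨hok, hV1, hV2⟩ := h.switch hi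
  have hT := hV2 _ ht
  have hA := hV2 (aN n k) (by
    intro hr
    exact ht (h.lev_rch (aN_vertex h1 h2) hr (by rw [lev_aN]; exact hl)).2)
  unfold Av Tv at *
  linarith

end vals
/-! Numbers of further edges. -/

lemma NB_travel (n i : ℕ) : NB n BV.t (BV.a i) = i := rfl
lemma NB_enter (n i : ℕ) : NB n (BV.a i) (BV.b i) = n + 1 + 5 * (i - 1) := rfl
lemma NB_board (n i : ℕ) : NB n (BV.a i) BV.t = n + 3 + 5 * (i - 1) := rfl

/-! ## The states of the algorithm -/

lemma Rch.tail {π : BV → BV} {x y : BV} (h : Rch π x y) (hne : x ≠ y) : Rch π (π x) y := by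
  obtain ⟨k, hk⟩ := h
  cases k with
  | zero => exact absurd hk hne
  | succ k => exact ⟨k, by rw [← Function.iterate_succ_apply]; exact hk⟩

lemma OKP.rch_vert {n : ℕ} {π : BV → BV} (h : OKP n π) {x y : BV} (hx : IsBVertex n x)
    (hr : Rch π x y) : IsBVertex n y := by
  obtain ⟨k, rfl⟩ := hr
  induction k with
  | zero => exact hx
  | succ k ih => rw [Function.iterate_succ_apply']; exact h.vert _ ih

/-- `travel 1` is active and no travel edge is improving. -/
structure SA (n : ℕ) (π : BV → BV) : Prop where
  ok : OKP n π
  tr : π BV.t = BV.a 1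
  le : ∀ k, 1 ≤ k → k ≤ n + 1 → Av n π k ≤ Tv n π

/-- `enter m` has just been applied and `travel m` is about to be applied. -/
structure SB (n : ℕ) (π : BV → BV) (m : ℕ) : Prop where
  ok : OKP n π
  hm2 : 2 ≤ m
  hmn : m ≤ n
  tr : π BV.t = BV.a 1
  ent : ∀ k, 1 ≤ k → k ≤ m → π (BV.a k) = BV.b k
  lea : ∀ k, 1 ≤ k → k + 2 ≤ m → π (BV.b k) = aN n (k + 1)
  sta : ∀ k, k + 1 = m → π (BV.b k) = bN n (k + 1)
  le : ∀ k, 1 ≤ k → k ≤ n + 1 → k ≠ m → Av n π k ≤ Tv n π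

/-- Common part of the states after `travel m`. -/
structure CBase (n : ℕ) (π : BV → BV) (m : ℕ) : Prop where
  ok : OKP n π
  hm2 : 2 ≤ m
  hmn : m ≤ n
  tr : π BV.t = BV.a m
  ent : π (BV.a m) = BV.b m
  le : ∀ k, m < k → k ≤ n + 1 → Av n π k ≤ Tv n π

/-- `board 1, …, board r` have been applied. -/
structure CB (n : ℕ) (π : BV → BV) (m r : ℕ) : Prop where
  base : CBase n π m
  hr : r + 2 ≤ m
  brd : ∀ k, 1 ≤ k → k ≤ r → π (BV.a k) = BV.t
  ent : ∀ k, r < k → k < m → π (BV.a k) = BV.b k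
  lea : ∀ k, 1 ≤ k → k + 2 ≤ m → π (BV.b k) = aN n (k + 1)
  sta : ∀ k, k + 1 = m → π (BV.b k) = bN n (k + 1)

/-- `skip (m-1)` and `stay (m-3), …, stay r` have been applied. -/
structure CS (n : ℕ) (π : BV → BV) (m r : ℕ) : Prop where
  base : CBase n π m
  hr1 : 1 ≤ r
  hr : r + 2 ≤ m
  brd : ∀ k, 1 ≤ k → k + 2 ≤ m → π (BV.a k) = BV.t
  ski : ∀ k, k + 1 = m → π (BV.a k) = aN n (k + 1)
  lea2 : ∀ k, k + 2 = m → π (BV.b k) = aN n (k + 1)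
  sta : ∀ k, r ≤ k → k + 3 ≤ m → π (BV.b k) = bN n (k + 1)
  lea : ∀ k, 1 ≤ k → k < r → π (BV.b k) = aN n (k + 1)

/-- The case `m = 2`, after `skip 1`. -/
structure D1 (n : ℕ) (π : BV → BV) : Prop where
  base : CBase n π 2
  ski : π (BV.a 1) = aN n 2
  sta : π (BV.b 1) = bN n 2

/-- The case `m = 2`, after `leave 1`. -/
structure D2 (n : ℕ) (π : BV → BV) : Prop where
  base : CBase n π 2
  ski : π (BV.a 1) = aN n 2
  lea : π (BV.b 1) = aN n 2

/-- Only `travel 1` is improving. -/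
structure SE (n : ℕ) (π : BV → BV) : Prop where
  ok : OKP n π
  gt : Tv n π < Av n π 1
  le : ∀ k, 2 ≤ k → k ≤ n + 1 → Av n π k ≤ Tv n π

section states
variable {n : ℕ} {π π' : BV → BV}

lemma CBase.not_rch {m : ℕ} (h : CBase n π m) {u : BV} (hu : u ≠ BV.t)
    (hl : lev n u < m) : ¬ Rch π BV.t u := by
  intro hr
  have h1 := hr.tail hu.symm
  rw [h.tr] at h1
  have h2 := (h.ok.lev_rch (x := BV.a m) (show IsBVertex n (BV.a m) from
    ⟨by have := h.hm2; omega, h.hmn⟩) h1 (by simpa [lev] using hl)).1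
  rw [← h.tr] at h2
  exact h.ok.nocycle (u := BV.t) trivial (by simp) h2

lemma CBase.step {m : ℕ} (h : CBase n π m) {u v : BV} (hi : BImproving n π u v) (hu : u ≠ BV.t)
    (hl : lev n u < m) : CBase n (Function.update π u v) m where
  ok := (h.ok.switch hi).1
  hm2 := h.hm2
  hmn := h.hmn
  tr := by rw [Function.update_of_ne hu.symm, h.tr]
  ent := by
    rw [Function.update_of_ne, h.ent]
    rintro rfl
    simp [lev] at hl
  le := by
    intro k hk1 hk2
    exact h.ok.keep hi (h.not_rch hu hl) (by omega) hk2 (by omega) (h.le k hk1 hk2)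

lemma CBase.T_eq {m : ℕ} (h : CBase n π m) : Tv n π = Av n π m := h.ok.T_travel h.hmn h.tr

lemma CBase.A_eq {m : ℕ} (h : CBase n π m) : Av n π m = 2 ^ m + Bv n π m :=
  h.ok.A_enter (by have := h.hm2; omega) h.hmn h.ent

/-- Applying `enter 1` leads to the state where only `travel 1` is improving. -/
lemma CBase.enter1 {m : ℕ} (h : CBase n π m) (hi : BImproving n π (BV.a 1) (BV.b 1))
    (hB : Tv n π - 2 < Bv n π 1) (hle : ∀ k, 1 ≤ k → k ≤ n + 1 → Av n π k ≤ Tv n π) :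
    SE n (Function.update π (BV.a 1) (BV.b 1)) := by
  have hm2 := h.hm2
  have hmn := h.hmn
  have hnr := h.not_rch (u := BV.a 1) (by simp) (by simp [lev]; omega)
  obtain ⟨hok, hV1, hV2⟩ := h.ok.switch hi
  refine ⟨hok, ?_, ?_⟩
  · have hT := hV2 _ hnr
    have hA := hV1 (BV.a 1) ⟨le_refl _, by omega⟩ (Rch.refl _ _)
    rw [Av_eq _ (by omega)]
    rw [Bv_eq _ (by omega)] at hB
    unfold Tv at *
    unfold zB at hA
    rw [rB_enter] at hA
    rw [hT, hA]
    linarith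
  · intro k hk1 hk2
    exact h.ok.keep hi hnr (by omega) hk2 (by simp [lev]; omega) (hle k (by omega) hk2)

/-! ### State SB -/

lemma SB.vals {m : ℕ} (h : SB n π m) : ∀ j k, k + (j + 1) = m → 1 ≤ k →
    Av n π k = Bv n π m + 2 ^ m - 2 ^ k + 3 / 4 := by
  have hmn := h.hmn
  intro j
  induction j with
  | zero =>
    intro k hk h1
    subst hk
    have e1 := h.ok.A_enter h1 (by omega) (h.ent k h1 (by omega))
    have e2 := h.ok.B_stay h1 (by omega) (h.sta k (by omega))
    have e3 : (2 : ℚ) ^ (k + 1) = 2 * 2 ^ k := by ring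
    simp only [zero_add]
    linarith
  | succ j ih =>
    intro k hk h1
    have e1 := h.ok.A_enter h1 (by omega) (h.ent k h1 (by omega))
    have e2 := h.ok.B_leave h1 (by omega) (h.lea k h1 (by omega))
    have e4 := ih (k + 1) (by omega) (by omega)
    have e3 : (2 : ℚ) ^ (k + 1) = 2 * 2 ^ k := by ring
    linarith

lemma SB.next {m : ℕ} (h : SB n π m) (hs : IsBlandStep n (NB n) π π') : CB n π' m 0 := by
  obtain ⟨u, v, hi, hmin, rfl⟩ := hs
  have hm2 := h.hm2
  have hmn := h.hmn
  have hT := h.ok.T_travel (by omega) h.tr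
  have h1 := h.vals (m - 2) 1 (by omega) (by omega)
  have h2 := h.ok.A_enter (by omega) hmn (h.ent m (by omega) (by omega))
  have hm : BImproving n π BV.t (BV.a m) := by
    rw [imp_travel (by omega) hmn, hT, h1, h2]
    norm_num
    linarith
  have hN := hmin _ _ hm
  rw [NB_travel] at hN
  obtain ⟨k, hk1, hk2, hc⟩ := h.ok.imp_cases hi
  rcases hc with ⟨rfl, rfl, hn, hv⟩ | ⟨rfl, rfl, hn, hv⟩ | ⟨rfl, rfl, hn, hv⟩ |
    ⟨rfl, rfl, hn, hv⟩ | ⟨rfl, rfl, hn, hv⟩ | ⟨rfl, rfl, hn, hv⟩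
  · by_cases hkm : k = m
    · subst hkm
      obtain ⟨hok, hle⟩ := h.ok.travel_step hk1 hk2 hi
      refine ⟨⟨hok, hm2, hmn, by simp, ?_, ?_⟩, by omega, by intros; omega, ?_, ?_, ?_⟩
      · rw [Function.update_of_ne (by simp)]; exact h.ent k hk1 (le_refl _)
      · intro j hj1 hj2
        exact hle j (by omega) hj2 (h.le j (by omega) hj2)
      · intro j hj1 hj2
        rw [Function.update_of_ne (by simp)]; exact h.ent j hj1 (by omega)
      · intro j hj1 hj2
        rw [Function.update_of_ne (by simp)]; exact h.lea j hj1 (by omega)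
      · intro j hj1
        rw [Function.update_of_ne (by simp)]; exact h.sta j hj1
    · have := h.le k hk1 (by omega) hkm
      linarith
  all_goals omega

/-! ### State SE -/

lemma SE.next (hn : 1 ≤ n) (h : SE n π) (hs : IsBlandStep n (NB n) π π') : SA n π' := by
  obtain ⟨u, v, hi, hmin, rfl⟩ := hs
  have hm : BImproving n π BV.t (BV.a 1) := by
    rw [imp_travel (by omega) hn]
    exact h.gt
  have hN := hmin _ _ hm
  rw [NB_travel] at hN
  obtain ⟨k, hk1, hk2, hc⟩ := h.ok.imp_cases hi
  rcases hc with ⟨rfl, rfl, hn, hv⟩ | ⟨rfl, rfl, hn, hv⟩ | ⟨rfl, rfl, hn, hv⟩ |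
    ⟨rfl, rfl, hn, hv⟩ | ⟨rfl, rfl, hn, hv⟩ | ⟨rfl, rfl, hn, hv⟩
  · have : k = 1 := by omega
    subst this
    obtain ⟨hok, hle⟩ := h.ok.travel_step hk1 hk2 hi
    refine ⟨hok, by simp, ?_⟩
    intro j hj1 hj2
    exact hle j hj1 hj2 (fun hj => h.le j (by omega) hj2)
  all_goals omega

/-! ### State CB -/

lemma CB.vals {m r : ℕ} (h : CB n π m r) : ∀ j k, k + (j + 1) = m → r < k →
    Av n π k = Tv n π - 2 ^ k + 3 / 4 := by
  have hmn := h.base.hmn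
  have hT := h.base.T_eq
  have hA := h.base.A_eq
  intro j
  induction j with
  | zero =>
    intro k hk h1
    subst hk
    have e1 := h.base.ok.A_enter (by omega) (by omega) (h.ent k h1 (by omega))
    have e2 := h.base.ok.B_stay (by omega) (by omega) (h.sta k (by omega))
    have e3 : (2 : ℚ) ^ (k + 1) = 2 * 2 ^ k := by ring
    simp only [zero_add] at hT hA
    linarith
  | succ j ih =>
    intro k hk h1
    have e1 := h.base.ok.A_enter (by omega) (by omega) (h.ent k h1 (by omega))
    have e2 := h.base.ok.B_leave (by omega) (by omega) (h.lea k (by omega) (by omega))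
    have e4 := ih (k + 1) (by omega) (by omega)
    have e3 : (2 : ℚ) ^ (k + 1) = 2 * 2 ^ k := by ring
    linarith

lemma CB.A1 {m r : ℕ} (h : CB n π m r) {k : ℕ} (h1 : 1 ≤ k) (h2 : k ≤ r) :
    Av n π k = Tv n π - 2 ^ k + 5 / 4 :=
  h.base.ok.A_board h1 (by have := h.hr; have := h.base.hmn; omega) (h.brd k h1 h2)

lemma CB.A2 {m r : ℕ} (h : CB n π m r) {k : ℕ} (h1 : r < k) (h2 : k < m) :
    Av n π k = Tv n π - 2 ^ k + 3 / 4 := h.vals (m - k - 1) k (by omega) h1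

lemma CB.Ale {m r : ℕ} (h : CB n π m r) {k : ℕ} (h1 : 1 ≤ k) (h2 : k < m) :
    Av n π k ≤ Tv n π - 2 ^ k + 5 / 4 := by
  rcases le_or_gt k r with hk | hk
  · rw [h.A1 h1 hk]
  · rw [h.A2 hk h2]; linarith

lemma CB.Age {m r : ℕ} (h : CB n π m r) {k : ℕ} (h1 : 1 ≤ k) (h2 : k < m) :
    Tv n π - 2 ^ k + 3 / 4 ≤ Av n π k := by
  rcases le_or_gt k r with hk | hk
  · rw [h.A1 h1 hk]; linarith
  · rw [h.A2 hk h2]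

lemma CB.le {m r : ℕ} (h : CB n π m r) (k : ℕ) (h1 : 1 ≤ k) (h2 : k ≤ n + 1) :
    Av n π k ≤ Tv n π := by
  rcases lt_trichotomy k m with hk | hk | hk
  · have := h.Ale h1 hk
    have := two_le_pow h1
    linarith
  · rw [h.base.T_eq, hk]
  · exact h.base.le k hk h2

/-- Levels at most `r` are optimal. -/
lemma CB.low {m r : ℕ} (h : CB n π m r) {k : ℕ} (h1 : 1 ≤ k) (h2 : k ≤ r) :
    2 ^ k + Bv n π k ≤ Av n π k ∧ Av n π (k + 1) ≤ Av n π k ∧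
    Tv n π - 2 ^ k + 5 / 4 ≤ Av n π k ∧ 3 / 4 + Bv n π (k + 1) ≤ Bv n π k ∧
    Av n π (k + 1) ≤ Bv n π k := by
  have hr := h.hr
  have hmn := h.base.hmn
  have e0 := h.A1 h1 h2
  have e1 := h.Ale (k := k + 1) (by omega) (by omega)
  have e1' := h.Age (k := k + 1) (by omega) (by omega)
  have e2 := h.base.ok.B_leave h1 (by omega) (h.lea k h1 (by omega))
  have p0 := two_le_pow h1
  have p1 : (2 : ℚ) ^ (k + 1) = 2 * 2 ^ k := by ring
  have p2 : (2 : ℚ) ^ (k + 2) = 4 * 2 ^ k := by ring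
  refine ⟨by linarith, by linarith, by linarith, ?_, by linarith⟩
  rcases Nat.lt_or_ge (k + 2) m with hk | hk
  · have e3 := h.base.ok.B_leave (k := k + 1) (by omega) (by omega)
      (h.lea (k + 1) (by omega) (by omega))
    have e4 := h.Ale (k := k + 2) (by omega) (by omega)
    have e3 : Bv n π (k + 1) = Av n π (k + 2) := e3
    linarith
  · have hm : k + 2 = m := by omega
    subst hm
    have e3 := h.base.ok.B_stay (k := k + 1) (by omega) (by omega) (h.sta (k + 1) (by omega))
    have e3 : Bv n π (k + 1) = 3 / 4 + Bv n π (k + 2) := e3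
    have e4 := h.base.T_eq
    have e5 := h.base.A_eq
    linarith

lemma CB.next1 {m r : ℕ} (h : CB n π m r) (hr3 : r + 3 ≤ m) (hs : IsBlandStep n (NB n) π π') :
    CB n π' m (r + 1) := by
  obtain ⟨u, v, hi, hmin, rfl⟩ := hs
  have hmn := h.base.hmn
  have hA := h.A2 (k := r + 1) (by omega) (by omega)
  have hm : BImproving n π (BV.a (r + 1)) BV.t := by
    rw [imp_board (by omega) (by omega), hA]
    linarith
  have hN := hmin _ _ hm
  rw [NB_board] at hN
  obtain ⟨k, hk1, hk2, hc⟩ := h.base.ok.imp_cases hi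
  have hlow := fun hkr => h.low hk1 (k := k) hkr
  rcases hc with ⟨rfl, rfl, hn, hv⟩ | ⟨rfl, rfl, hn, hv⟩ | ⟨rfl, rfl, hn, hv⟩ |
    ⟨rfl, rfl, hn, hv⟩ | ⟨rfl, rfl, hn, hv⟩ | ⟨rfl, rfl, hn, hv⟩
  · have := h.le k hk1 (by omega)
    linarith
  · exfalso
    rcases le_or_gt k r with hkr | hkr
    · have := (hlow hkr).1; linarith
    · have := h.base.ok.A_enter hk1 hk2 (h.ent k hkr (by omega))
      linarith
  · exfalso
    rcases le_or_gt k r with hkr | hkr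
    · have := (hlow hkr).2.1; linarith
    · have e1 := h.A2 hkr (by omega)
      have e2 := h.A2 (k := k + 1) (by omega) (by omega)
      have p0 := two_le_pow hk1
      have p1 : (2 : ℚ) ^ (k + 1) = 2 * 2 ^ k := by ring
      linarith
  · rcases le_or_gt k r with hkr | hkr
    · have := (hlow hkr).2.2.1; linarith
    · have : k = r + 1 := by omega
      subst this
      refine ⟨h.base.step hi (by simp) (by simp [lev]; omega), by omega, ?_, ?_, ?_, ?_⟩
      · intro j hj1 hj2
        by_cases hj : j = r + 1
        · subst hj; simp
        · rw [Function.update_of_ne (by simpa using hj)]; exact h.brd j hj1 (by omega)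
      · intro j hj1 hj2
        rw [Function.update_of_ne (by simp; omega)]; exact h.ent j (by omega) hj2
      · intro j hj1 hj2
        rw [Function.update_of_ne (by simp)]; exact h.lea j hj1 (by omega)
      · intro j hj1
        rw [Function.update_of_ne (by simp)]; exact h.sta j hj1
  · have := (hlow (by omega)).2.2.2.1; linarith
  · have := (hlow (by omega)).2.2.2.2; linarith

lemma CB.next2 {m r : ℕ} (h : CB n π m r) (hr3 : r + 2 = m) (hs : IsBlandStep n (NB n) π π') :
    (∃ q, CS n π' m q) ∨ D1 n π' := by
  obtain ⟨u, v, hi, hmin, rfl⟩ := hs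
  have hmn := h.base.hmn
  have hA := h.A2 (k := r + 1) (by omega) (by omega)
  have hT := h.base.T_eq
  have hm : BImproving n π (BV.a (r + 1)) (aN n (r + 1 + 1)) := by
    rw [imp_skip (by omega) (by omega), hA]
    subst hr3
    have := two_le_pow (i := r + 1) (by omega)
    change _ < Av n π (r + 2)
    linarith
  have hN := hmin _ _ hm
  rw [NB_skip] at hN
  obtain ⟨k, hk1, hk2, hc⟩ := h.base.ok.imp_cases hi
  have hlow := fun hkr => h.low hk1 (k := k) hkr
  rcases hc with ⟨rfl, rfl, hn, hv⟩ | ⟨rfl, rfl, hn, hv⟩ | ⟨rfl, rfl, hn, hv⟩ |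
    ⟨rfl, rfl, hn, hv⟩ | ⟨rfl, rfl, hn, hv⟩ | ⟨rfl, rfl, hn, hv⟩
  · have := h.le k hk1 (by omega)
    linarith
  · exfalso
    rcases le_or_gt k r with hkr | hkr
    · have := (hlow hkr).1; linarith
    · have := h.base.ok.A_enter hk1 hk2 (h.ent k hkr (by omega))
      linarith
  · rcases le_or_gt k r with hkr | hkr
    · have := (hlow hkr).2.1; linarith
    · have : k = r + 1 := by omega
      subst this
      have hb := h.base.step hi (by simp) (by simp [lev]; omega)
      rcases Nat.eq_zero_or_pos r with h0 | h0
      · right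
        subst h0
        have hm2 : m = 2 := by omega
        subst hm2
        refine ⟨hb, by simp, ?_⟩
        rw [Function.update_of_ne (by simp)]; exact h.sta 1 (by omega)
      · left
        refine ⟨r, hb, h0, by omega, ?_, ?_, ?_, ?_, ?_⟩
        · intro j hj1 hj2
          rw [Function.update_of_ne (by simp; omega)]; exact h.brd j hj1 (by omega)
        · intro j hj
          have : j = r + 1 := by omega
          subst this; simp
        · intro j hj
          rw [Function.update_of_ne (by simp)]; exact h.lea j (by omega) (by omega)
        · intro j hj1 hj2; omega
        · intro j hj1 hj2
          rw [Function.update_of_ne (by simp)]; exact h.lea j (by omega) (by omega)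
  · have := (hlow (by omega)).2.2.1; linarith
  · have := (hlow (by omega)).2.2.2.1; linarith
  · have := (hlow (by omega)).2.2.2.2; linarith

/-! ### State CS -/

lemma CS.A1 {m r : ℕ} (h : CS n π m r) {k : ℕ} (h1 : 1 ≤ k) (h2 : k + 2 ≤ m) :
    Av n π k = Tv n π - 2 ^ k + 5 / 4 :=
  h.base.ok.A_board h1 (by have := h.base.hmn; omega) (h.brd k h1 h2)

lemma CS.le {m r : ℕ} (h : CS n π m r) (k : ℕ) (h1 : 1 ≤ k) (h2 : k ≤ n + 1) :
    Av n π k ≤ Tv n π := by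
  have hmn := h.base.hmn
  rcases lt_trichotomy k m with hk | hk | hk
  · rcases Nat.lt_or_ge (k + 1) m with hk' | hk'
    · have := h.A1 h1 (by omega)
      have := two_le_pow h1
      linarith
    · have hm : k + 1 = m := by omega
      subst hm
      rw [h.base.T_eq, h.base.ok.A_skip h1 (by omega) (h.ski k rfl)]
  · rw [h.base.T_eq, hk]
  · exact h.base.le k hk h2

lemma CS.Bge {m r : ℕ} (h : CS n π m r) : ∀ j k, k + (j + 2) = m → r ≤ k →
    Tv n π ≤ Bv n π k := by
  have hmn := h.base.hmn
  have hr1 := h.hr1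
  have hT := h.base.T_eq
  intro j
  induction j with
  | zero =>
    intro k hk h1
    subst hk
    have e1 := h.base.ok.B_leave (by omega) (by omega) (h.lea2 k (by omega))
    have e2 := h.base.ok.A_skip (k := k + 1) (by omega) (by omega) (h.ski (k + 1) (by omega))
    rw [e1, e2, hT]
  | succ j ih =>
    intro k hk h1
    have e1 := h.base.ok.B_stay (by omega) (by omega) (h.sta k (by omega) (by omega))
    have e4 := ih (k + 1) (by omega) (by omega)
    linarith

lemma CS.next1 {m r : ℕ} (h : CS n π m r) (hr2 : 2 ≤ r) (hs : IsBlandStep n (NB n) π π') :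
    CS n π' m (r - 1) := by
  obtain ⟨u, v, hi, hmin, rfl⟩ := hs
  have hmn := h.base.hmn
  have hr := h.hr
  obtain ⟨q, rfl⟩ : ∃ q, r = q + 1 := ⟨r - 1, by omega⟩
  have hB := h.Bge (m - (q + 1) - 2) (q + 1) (by omega) (le_refl _)
  have hm : BImproving n π (BV.b q) (bN n (q + 1)) := by
    rw [imp_stay (by omega) (by omega)]
    have e1 := h.base.ok.B_leave (by omega) (by omega) (h.lea q (by omega) (by omega))
    have e2 := h.A1 (k := q + 1) (by omega) (by omega)
    have := two_le_pow (i := q + 1) (by omega)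
    linarith
  have hN := hmin _ _ hm
  rw [NB_stay] at hN
  obtain ⟨k, hk1, hk2, hc⟩ := h.base.ok.imp_cases hi
  have p0 := two_le_pow hk1
  have p1 : (2 : ℚ) ^ (k + 1) = 2 * 2 ^ k := by ring
  have p2 : (2 : ℚ) ^ (k + 2) = 4 * 2 ^ k := by ring
  have hA : k ≤ q + 1 → Av n π k = Tv n π - 2 ^ k + 5 / 4 := fun hk => h.A1 hk1 (by omega)
  have hA1 : k ≤ q → Av n π (k + 1) = Tv n π - 2 ^ (k + 1) + 5 / 4 :=
    fun hk => h.A1 (by omega) (by omega)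
  have hB1 : k ≤ q → Bv n π k = Av n π (k + 1) :=
    fun hk => h.base.ok.B_leave hk1 hk2 (h.lea k hk1 (by omega))
  rcases hc with ⟨rfl, rfl, hn, hv⟩ | ⟨rfl, rfl, hn, hv⟩ | ⟨rfl, rfl, hn, hv⟩ |
    ⟨rfl, rfl, hn, hv⟩ | ⟨rfl, rfl, hn, hv⟩ | ⟨rfl, rfl, hn, hv⟩
  · have := h.le k hk1 (by omega)
    linarith
  · have := hA (by omega)
    have := hA1 (by omega)
    have := hB1 (by omega)
    linarith
  · have := hA (by omega)
    have := hA1 (by omega)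
    linarith
  · have := hA (by omega)
    linarith
  · rcases Nat.lt_or_ge k q with hkq | hkq
    · have e1 := hA1 (by omega)
      have e2 := hB1 (by omega)
      have e3 := h.base.ok.B_leave (k := k + 1) (by omega) (by omega)
        (h.lea (k + 1) (by omega) (by omega))
      have e4 : Av n π (k + 1 + 1) = Tv n π - 2 ^ (k + 2) + 5 / 4 :=
        h.A1 (k := k + 2) (by omega) (by omega)
      linarith
    · have : k = q := by omega
      subst this
      simp only [Nat.add_sub_cancel]
      refine ⟨h.base.step hi (by simp) (by simp [lev]; omega), hk1, by omega, ?_, ?_, ?_, ?_, ?_⟩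
      · intro j hj1 hj2
        rw [Function.update_of_ne (by simp)]; exact h.brd j hj1 (by omega)
      · intro j hj1
        rw [Function.update_of_ne (by simp)]; exact h.ski j hj1
      · intro j hj1
        rw [Function.update_of_ne (by simp; omega)]; exact h.lea2 j hj1
      · intro j hj1 hj2
        by_cases hj : j = k
        · subst hj; simp
        · rw [Function.update_of_ne (by simpa using hj)]; exact h.sta j (by omega) hj2
      · intro j hj1 hj2
        rw [Function.update_of_ne (by simp; omega)]; exact h.lea j hj1 (by omega)
  · have := hB1 (by omega)
    linarith

lemma CS.next2 {m : ℕ} (h : CS n π m 1) (hs : IsBlandStep n (NB n) π π') : SE n π' := by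
  obtain ⟨u, v, hi, hmin, rfl⟩ := hs
  have hmn := h.base.hmn
  have hr := h.hr
  have hB := h.Bge (m - 1 - 2) 1 (by omega) (le_refl _)
  have hm : BImproving n π (BV.a 1) (BV.b 1) := by
    rw [imp_enter (by omega) (by omega)]
    have e2 := h.A1 (k := 1) (by omega) (by omega)
    linarith
  have hN := hmin _ _ hm
  rw [NB_enter] at hN
  obtain ⟨k, hk1, hk2, hc⟩ := h.base.ok.imp_cases hi
  rcases hc with ⟨rfl, rfl, hn, hv⟩ | ⟨rfl, rfl, hn, hv⟩ | ⟨rfl, rfl, hn, hv⟩ |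
    ⟨rfl, rfl, hn, hv⟩ | ⟨rfl, rfl, hn, hv⟩ | ⟨rfl, rfl, hn, hv⟩
  · have := h.le k hk1 (by omega)
    linarith
  · have : k = 1 := by omega
    subst this
    exact h.base.enter1 hi (by linarith) h.le
  all_goals omega

/-! ### States D1, D2 -/

lemma CBase.le2 (h : CBase n π 2) (hs : π (BV.a 1) = aN n 2) (k : ℕ) (h1 : 1 ≤ k)
    (h2 : k ≤ n + 1) : Av n π k ≤ Tv n π := by
  have hmn := h.hmn
  rcases lt_trichotomy k 2 with hk | hk | hk
  · have : k = 1 := by omega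
    subst this
    rw [h.T_eq, h.ok.A_skip h1 (by omega) hs]
  · rw [h.T_eq, hk]
  · exact h.le k hk h2

lemma D1.next (h : D1 n π) (hs : IsBlandStep n (NB n) π π') : D2 n π' := by
  obtain ⟨u, v, hi, hmin, rfl⟩ := hs
  have hmn := h.base.hmn
  have e1 := h.base.T_eq
  have e2 := h.base.A_eq
  have e3 := h.base.ok.A_skip (k := 1) (by omega) (by omega) h.ski
  have e4 := h.base.ok.B_stay (k := 1) (by omega) (by omega) h.sta
  norm_num at e2 e3 e4
  have hm : BImproving n π (BV.b 1) (aN n (1 + 1)) := by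
    rw [imp_leave (by omega) (by omega)]
    norm_num
    linarith
  have hN := hmin _ _ hm
  rw [NB_leave] at hN
  obtain ⟨k, hk1, hk2, hc⟩ := h.base.ok.imp_cases hi
  rcases hc with ⟨rfl, rfl, hn, hv⟩ | hc
  · have := h.base.le2 h.ski k hk1 (by omega)
    linarith
  have hk : k = 1 := by
    rcases hc with ⟨rfl, rfl, hn, hv⟩ | ⟨rfl, rfl, hn, hv⟩ |
      ⟨rfl, rfl, hn, hv⟩ | ⟨rfl, rfl, hn, hv⟩ | ⟨rfl, rfl, hn, hv⟩ <;> omega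
  subst hk
  norm_num at hc
  rcases hc with ⟨rfl, rfl, hn, hv⟩ | ⟨rfl, rfl, hn, hv⟩ |
    ⟨rfl, rfl, hn, hv⟩ | ⟨rfl, rfl, hn, hv⟩ | ⟨rfl, rfl, hn, hv⟩
  · linarith
  · linarith
  · linarith
  · linarith
  · refine ⟨h.base.step hi (by simp) (by simp [lev]), ?_, by simp⟩
    rw [Function.update_of_ne (by simp)]; exact h.ski

lemma D2.next (h : D2 n π) (hs : IsBlandStep n (NB n) π π') : SE n π' := by
  obtain ⟨u, v, hi, hmin, rfl⟩ := hs
  have hmn := h.base.hmn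
  have e1 := h.base.T_eq
  have e3 := h.base.ok.A_skip (k := 1) (by omega) (by omega) h.ski
  have e4 := h.base.ok.B_leave (k := 1) (by omega) (by omega) h.lea
  norm_num at e3 e4
  have hm : BImproving n π (BV.a 1) (BV.b 1) := by
    rw [imp_enter (by omega) (by omega)]
    norm_num
    linarith
  have hN := hmin _ _ hm
  rw [NB_enter] at hN
  obtain ⟨k, hk1, hk2, hc⟩ := h.base.ok.imp_cases hi
  rcases hc with ⟨rfl, rfl, hn, hv⟩ | ⟨rfl, rfl, hn, hv⟩ | ⟨rfl, rfl, hn, hv⟩ |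
    ⟨rfl, rfl, hn, hv⟩ | ⟨rfl, rfl, hn, hv⟩ | ⟨rfl, rfl, hn, hv⟩
  · have := h.base.le2 h.ski k hk1 (by omega)
    linarith
  · have : k = 1 := by omega
    subst this
    exact h.base.enter1 hi (by linarith) (h.base.le2 h.ski)
  all_goals omega

end states


/-! ### State SA -/

section stateSA
variable {n : ℕ} {π π' : BV → BV}

/-- Vertices reached from `t` do not point to `t`. -/
lemma OKP.ne_t (h : OKP n π) {u : BV} (hu : u ≠ BV.t) (hr : Rch π BV.t u) : π u ≠ BV.t := by
  intro he
  have h1 := hr.tail hu.symm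
  exact h.nocycle (u := BV.t) trivial (by simp) (h1.trans (Rch.head' he (Rch.refl _ _)))

/-- The situation in which the levels below `i` have no improving enter, stay and leave. -/
structure Low (n : ℕ) (π : BV → BV) (i : ℕ) : Prop where
  sa : SA n π
  hi1 : 1 ≤ i
  hin : i ≤ n
  ent : ∀ j, 1 ≤ j → j < i → 2 ^ j + Bv n π j ≤ Av n π j
  sta : ∀ j, 1 ≤ j → j < i → 3 / 4 + Bv n π (j + 1) ≤ Bv n π j
  lea : ∀ j, 1 ≤ j → j < i → Av n π (j + 1) ≤ Bv n π j

lemma Low.a_cases {i : ℕ} (h : Low n π i) {j : ℕ} (h1 : 1 ≤ j) (h2 : j < i) :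
    π (BV.a j) = BV.b j ∨ π (BV.a j) = BV.t := by
  have hin := h.hin
  rcases edge_a (h.sa.ok.pol (BV.a j) ⟨h1, by omega⟩) with e | e | e
  · exact Or.inl e
  · have e1 := h.sa.ok.A_skip h1 (by omega) e
    have e2 := h.ent j h1 h2
    have e3 := h.lea j h1 h2
    have := two_le_pow h1
    linarith
  · exact Or.inr e

lemma Low.rch_b_of_a {i : ℕ} (h : Low n π i) {j : ℕ} (h1 : 1 ≤ j) (h2 : j < i)
    (hr : Rch π BV.t (BV.a j)) : Rch π BV.t (BV.b j) := by
  rcases h.a_cases h1 h2 with e | e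
  · exact hr.trans (Rch.head' e (Rch.refl _ _))
  · exact absurd e (h.sa.ok.ne_t (by simp) hr)

lemma Low.rch_a1 {i : ℕ} (h : Low n π i) : Rch π BV.t (BV.a 1) :=
  Rch.head' h.sa.tr (Rch.refl _ _)

lemma Low.rch_b {i : ℕ} (h : Low n π i) : ∀ j, j + 1 < i → Rch π BV.t (BV.b (j + 1)) := by
  have hin := h.hin
  intro j
  induction j with
  | zero => intro hj; exact h.rch_b_of_a (le_refl _) hj h.rch_a1
  | succ j ih =>
    intro hj
    have h1 := ih (by omega)
    rcases edge_b (h.sa.ok.pol (BV.b (j + 1)) ⟨by omega, by omega⟩) with e | e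
    · rw [bN_eq (by omega)] at e
      exact h1.trans (Rch.head' e (Rch.refl _ _))
    · rw [aN_eq (by omega)] at e
      exact h.rch_b_of_a (by omega) (by omega) (h1.trans (Rch.head' e (Rch.refl _ _)))

/-- The vertex `t` reaches `a i` or `b i`. -/
lemma Low.rch_i {i : ℕ} (h : Low n π i) :
    Rch π BV.t (BV.a i) ∨ (Rch π BV.t (BV.b i) ∧ 2 ≤ i ∧ 
      ∀ j, j + 1 = i → π (BV.b j) = bN n (j + 1)) := by
  have hin := h.hin
  have hi1 := h.hi1
  rcases Nat.lt_or_ge 1 i with hi | hi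
  · obtain ⟨p, rfl⟩ : ∃ p, i = p + 2 := ⟨i - 2, by omega⟩
    have h1 := h.rch_b p (by omega)
    rcases edge_b (h.sa.ok.pol (BV.b (p + 1)) ⟨by omega, by omega⟩) with e | e
    · right
      refine ⟨?_, by omega, ?_⟩
      · rw [bN_eq (by omega)] at e
        exact h1.trans (Rch.head' e (Rch.refl _ _))
      · intro j hj
        have : j = p + 1 := by omega
        subst this
        exact e
    · left
      rw [aN_eq (by omega)] at e
      exact h1.trans (Rch.head' e (Rch.refl _ _))
  · have : i = 1 := by omega
    subst this
    exact Or.inl h.rch_a1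

lemma Low.only {i : ℕ} (h : Low n π i) {u : BV} (hu : u = BV.a i ∨ u = BV.b i)
    (ht : ¬ Rch π BV.t u) {w : BV} (hw : IsBVertex n w) (hr : Rch π w u) : w = u := by
  have hin := h.hin
  have hi1 := h.hi1
  rcases hr.cases_last with hr | ⟨x, hx1, hx2⟩
  · exact hr
  exfalso
  have hxv := h.sa.ok.rch_vert hw hx1
  have hxt : ¬ Rch π BV.t x := fun hh => ht (hh.trans (Rch.head' hx2 (Rch.refl _ _)))
  have he := h.sa.ok.pol x hxv
  cases x with
  | t => exact hxt (Rch.refl _ _)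
  | s => rw [h.sa.ok.s] at hx2; rcases hu with rfl | rfl <;> simp at hx2
  | d => rw [edge_d he] at hx2; rcases hu with rfl | rfl <;> simp at hx2
  | a j =>
    obtain ⟨hj1, hj2⟩ := hxv
    rcases hu with rfl | rfl
    · rcases edge_a he with e | e | e
      · rw [e] at hx2; simp at hx2
      · have hj : j + 1 = i := by
          have := congrArg (lev n) (e.symm.trans hx2)
          rw [lev_aN] at this
          exact this
        rcases h.a_cases hj1 (by omega) with e | e
        · rw [e] at hx2; simp at hx2
        · rw [e] at hx2; simp at hx2
      · rw [e] at hx2; simp at hx2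
    · rcases edge_a he with e | e | e
      · rw [e] at hx2
        have hj : j = i := by simpa using hx2
        subst hj
        rcases h.rch_i with h1 | h1
        · exact hxt h1
        · exact ht h1.1
      · rw [e] at hx2; unfold aN at hx2; split_ifs at hx2
      · rw [e] at hx2; simp at hx2
  | b j =>
    obtain ⟨hj1, hj2⟩ := hxv
    have hj : j + 1 = i := by
      rcases edge_b he with e | e
      · have := congrArg (lev n) (e.symm.trans hx2)
        rw [lev_bN] at this
        rcases hu with rfl | rfl <;> exact this
      · have := congrArg (lev n) (e.symm.trans hx2)
        rw [lev_aN] at this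
        rcases hu with rfl | rfl <;> exact this
    obtain ⟨p, rfl⟩ : ∃ p, j = p + 1 := ⟨j - 1, by omega⟩
    exact hxt (h.rch_b p (by omega))

/-- The lower bounds on the values below level `i` when `b (i-1)` stays. -/
lemma Low.bound {i : ℕ} (h : Low n π i) (hst : ∀ j, j + 1 = i → π (BV.b j) = bN n (j + 1)) :
    ∀ q j, j + (q + 1) = i → 1 ≤ j → Bv n π i + 2 ^ i - 2 ^ j + 3 / 4 ≤ Av n π j := by
  have hin := h.hin
  intro q
  induction q with
  | zero =>
    intro j hj h1
    subst hj
    have e1 := h.ent j h1 (by omega)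
    have e2 := h.sta j h1 (by omega)
    have p1 : (2 : ℚ) ^ (j + 1) = 2 * 2 ^ j := by ring
    simp only [zero_add]
    linarith
  | succ q ih =>
    intro j hj h1
    have e0 := ih (j + 1) (by omega) (by omega)
    have e1 := h.ent j h1 (by omega)
    have e2 := h.lea j h1 (by omega)
    have p1 : (2 : ℚ) ^ (j + 1) = 2 * 2 ^ j := by ring
    linarith

lemma Low.T_le {i : ℕ} (h : Low n π i) (h2 : 2 ≤ i)
    (hst : ∀ j, j + 1 = i → π (BV.b j) = bN n (j + 1)) :
    Tv n π ≤ Bv n π i + 3 / 4 + 2 ^ i - 2 := by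
  have hin := h.hin
  obtain ⟨p, rfl⟩ : ∃ p, i = p + 2 := ⟨i - 2, by omega⟩
  have h1 := h.rch_b p (by omega)
  have h3 := h.sa.ok.rch_pot BV.t trivial h1
  have h4 := h.sa.ok.B_stay (k := p + 1) (by omega) (by omega) (hst (p + 1) (by omega))
  rw [Bv_eq π (by omega)] at h4
  have h4 : BVal n π (BV.b (p + 1)) = 3 / 4 + Bv n π (p + 2) := h4
  have h5 : Pot n BV.t = -2 := rfl
  have h6 : Pot n (BV.b (p + 1)) = -(2 ^ (p + 2)) := rfl
  unfold Tv
  linarith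

/-- The switch `enter i`. -/
lemma Low.enter {i : ℕ} (h : Low n π i) (hi : BImproving n π (BV.a i) (BV.b i))
    (ht : ¬ Rch π BV.t (BV.a i))
    (hle : ∀ k, 1 ≤ k → k ≤ n + 1 → k ≠ i →
      Av n (Function.update π (BV.a i) (BV.b i)) k ≤
        Tv n (Function.update π (BV.a i) (BV.b i))) :
    SB n (Function.update π (BV.a i) (BV.b i)) i := by
  have hin := h.hin
  obtain ⟨-, h2, hst⟩ := h.rch_i.resolve_left ht
  have hT := h.T_le h2 hst
  have hent : ∀ j, 1 ≤ j → j < i → π (BV.a j) = BV.b j := by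
    intro j hj1 hj2
    rcases h.a_cases hj1 hj2 with e | e
    · exact e
    · have e1 := h.sa.ok.A_board hj1 (by omega) e
      have e2 := h.bound hst (i - j - 1) j (by omega) hj1
      linarith
  refine ⟨(h.sa.ok.switch hi).1, h2, hin, ?_, ?_, ?_, ?_, hle⟩
  · rw [Function.update_of_ne (by simp)]; exact h.sa.tr
  · intro j hj1 hj2
    by_cases hj : j = i
    · subst hj; simp
    · rw [Function.update_of_ne (by simpa using hj)]; exact hent j hj1 (by omega)
  · intro j hj1 hj2
    rw [Function.update_of_ne (by simp)]
    rcases edge_b (h.sa.ok.pol (BV.b j) ⟨hj1, by omega⟩) with e | e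
    · have e1 := h.sa.ok.B_stay hj1 (by omega) e
      have e2 := h.lea j hj1 (by omega)
      have e3 := h.ent (j + 1) (by omega) (by omega)
      have := two_le_pow (i := j + 1) (by omega)
      linarith
    · exact e
  · intro j hj
    rw [Function.update_of_ne (by simp)]; exact hst j hj

lemma SA.next (h : SA n π) (hs : IsBlandStep n (NB n) π π') :
    SA n π' ∨ ∃ m, SB n π' m := by
  obtain ⟨u, v, hi, hmin, rfl⟩ := hs
  obtain ⟨hok, hV1, hV2⟩ := h.ok.switch hi
  obtain ⟨i, hi1, hin, hc⟩ := h.ok.imp_cases hi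
  rcases hc with ⟨rfl, rfl, hn, hv⟩ | hc
  · have := h.le i hi1 (by omega)
    linarith
  have hN : n + 5 * i ≤ NB n u v + 4 := by
    rcases hc with ⟨-, -, hn, hv⟩ | ⟨-, -, hn, hv⟩ | ⟨-, -, hn, hv⟩ |
      ⟨-, -, hn, hv⟩ | ⟨-, -, hn, hv⟩ <;> omega
  have hu : u = BV.a i ∨ u = BV.b i := by tauto
  have hut : u ≠ BV.t := by rcases hu with rfl | rfl <;> simp
  have htr : Function.update π u v BV.t = BV.a 1 := by
    rw [Function.update_of_ne hut.symm]; exact h.tr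
  by_cases ht : Rch π BV.t u
  · left
    refine ⟨hok, htr, ?_⟩
    intro k hk1 hk2
    have hT := hV1 BV.t trivial ht
    have hle := h.le k hk1 hk2
    have hz := hi.2
    by_cases hr : Rch π (aN n k) u
    · have hA := hV1 _ (aN_vertex hk1 hk2) hr
      unfold Av Tv at *
      linarith
    · have hA := hV2 _ hr
      unfold Av Tv at *
      linarith
  have hl : Low n π i := by
    refine ⟨h, hi1, hin, ?_, ?_, ?_⟩
    · intro j hj1 hj2
      by_contra hcon
      have := hmin _ _ ((imp_enter hj1 (by omega)).2 (not_le.1 hcon))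
      rw [NB_enter] at this
      omega
    · intro j hj1 hj2
      by_contra hcon
      have := hmin _ _ ((imp_stay hj1 (by omega)).2 (not_le.1 hcon))
      rw [NB_stay] at this
      omega
    · intro j hj1 hj2
      by_contra hcon
      have := hmin _ _ ((imp_leave hj1 (by omega)).2 (not_le.1 hcon))
      rw [NB_leave] at this
      omega
  have hT : Tv n (Function.update π u v) = Tv n π := hV2 _ ht
  have hA : ∀ k, 1 ≤ k → k ≤ n + 1 → aN n k ≠ u →
      Av n (Function.update π u v) k = Av n π k := by
    intro k hk1 hk2 hne
    exact hV2 _ (fun hr => hne (hl.only hu ht (aN_vertex hk1 hk2) hr))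
  have hle : ∀ k, 1 ≤ k → k ≤ n + 1 → aN n k ≠ u →
      Av n (Function.update π u v) k ≤ Tv n (Function.update π u v) := by
    intro k hk1 hk2 hne
    rw [hA k hk1 hk2 hne, hT]
    exact h.le k hk1 hk2
  rcases hu with rfl | rfl
  · have hne : ∀ k, k ≠ i → aN n k ≠ BV.a i := by
      intro k hk he
      have := congrArg (lev n) he
      rw [lev_aN] at this
      exact hk this
    have key : Av n (Function.update π (BV.a i) v) i ≤ Tv n (Function.update π (BV.a i) v) →
        SA n (Function.update π (BV.a i) v) := by
      intro hk
      refine ⟨hok, htr, ?_⟩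
      intro k hk1 hk2
      by_cases hki : k = i
      · subst hki; exact hk
      · exact hle k hk1 hk2 (hne k hki)
    rcases hc with ⟨-, rfl, hn, hv⟩ | ⟨-, rfl, hn, hv⟩ | ⟨-, rfl, hn, hv⟩ |
      ⟨h0, -⟩ | ⟨h0, -⟩
    · right
      exact ⟨i, hl.enter hi ht (fun k hk1 hk2 hk => hle k hk1 hk2 (hne k hk))⟩
    · left
      apply key
      rw [hok.A_skip hi1 hin (Function.update_self ..)]
      exact hle (i + 1) (by omega) (by omega) (hne _ (by omega))
    · left
      apply key
      rw [hok.A_board hi1 hin (Function.update_self ..)]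
      have := two_le_pow hi1
      linarith
    · simp at h0
    · simp at h0
  · left
    refine ⟨hok, htr, ?_⟩
    intro k hk1 hk2
    refine hle k hk1 hk2 ?_
    unfold aN
    split_ifs <;> simp

/-! ### The initial policy -/

lemma pi0_rch (n : ℕ) : ∀ q i, i + q = n + 1 → Rch (pi0 n) (aN n i) BV.s := by
  intro q
  induction q with
  | zero => intro i hi; unfold aN; rw [if_pos (by omega)]; exact Rch.refl _ _
  | succ q ih =>
    intro i hi
    rw [aN_eq (by omega)]
    exact Rch.head' (show pi0 n (BV.a i) = aN n (i + 1) from rfl) (ih (i + 1) (by omega))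

lemma pi0_ok (hn : 1 ≤ n) : OKP n (pi0 n) := by
  constructor
  · intro u hu
    cases u with
    | t => exact Or.inl ⟨1, le_refl _, hn, rfl, rfl⟩
    | s => exact Or.inr (Or.inr (Or.inr (Or.inr (Or.inr (Or.inr (Or.inr ⟨rfl, rfl⟩))))))
    | d => exact Or.inr (Or.inr (Or.inr (Or.inr (Or.inr (Or.inr (Or.inl ⟨rfl, rfl⟩))))))
    | a i => exact Or.inr (Or.inr (Or.inl ⟨i, hu.1, hu.2, rfl, rfl⟩))
    | b i => exact Or.inr (Or.inr (Or.inr (Or.inr (Or.inr (Or.inl ⟨i, hu.1, hu.2, rfl, rfl⟩)))))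
  · intro u hu
    change Rch (pi0 n) u BV.s
    cases u with
    | t =>
      have := pi0_rch n n 1 (by omega)
      rw [aN_eq hn] at this
      exact Rch.head' (show pi0 n BV.t = BV.a 1 from rfl) this
    | s => exact Rch.refl _ _
    | d => exact Rch.head' (show pi0 n BV.d = BV.s from rfl) (Rch.refl _ _)
    | a i =>
      have := pi0_rch n (n + 1 - i) i (by have := hu.2; omega)
      rwa [aN_eq hu.2] at this
    | b i =>
      exact Rch.head' (show pi0 n (BV.b i) = aN n (i + 1) from rfl)
        (pi0_rch n (n - i) (i + 1) (by have := hu.2; omega))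

lemma pi0_A (hn : 1 ≤ n) : ∀ q i, i + q = n + 1 → 1 ≤ i → Av n (pi0 n) i = 0 := by
  intro q
  induction q with
  | zero =>
    intro i hi h1
    unfold Av aN
    rw [if_pos (by omega), BVal_s]
  | succ q ih =>
    intro i hi h1
    rw [(pi0_ok hn).A_skip h1 (by omega) rfl]
    exact ih (i + 1) (by omega) (by omega)

lemma pi0_SA (hn : 1 ≤ n) : SA n (pi0 n) := by
  refine ⟨pi0_ok hn, rfl, ?_⟩
  intro k hk1 hk2
  rw [(pi0_ok hn).T_travel hn rfl, pi0_A hn (n + 1 - k) k (by omega) hk1,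
    pi0_A hn n 1 (by omega) (le_refl _)]

/-- The invariant. -/
def BInv (n : ℕ) (π : BV → BV) : Prop :=
  SA n π ∨ (∃ m, SB n π m) ∨ (∃ m r, CB n π m r) ∨ (∃ m r, CS n π m r) ∨ D1 n π ∨ D2 n π ∨ SE n π

lemma BInv.next (hn : 1 ≤ n) (h : BInv n π) (hs : IsBlandStep n (NB n) π π') : BInv n π' := by
  unfold BInv
  rcases h with h | ⟨m, h⟩ | ⟨m, r, h⟩ | ⟨m, r, h⟩ | h | h | h
  · rcases h.next hs with h | h
    · exact Or.inl h
    · exact Or.inr (Or.inl h)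
  · exact Or.inr (Or.inr (Or.inl ⟨m, 0, h.next hs⟩))
  · rcases Nat.lt_or_ge (r + 2) m with hr | hr
    · exact Or.inr (Or.inr (Or.inl ⟨m, r + 1, h.next1 (by omega) hs⟩))
    · rcases h.next2 (by have := h.hr; omega) hs with ⟨q, h⟩ | h
      · exact Or.inr (Or.inr (Or.inr (Or.inl ⟨m, q, h⟩)))
      · exact Or.inr (Or.inr (Or.inr (Or.inr (Or.inl h))))
  · rcases Nat.lt_or_ge 1 r with hr | hr
    · exact Or.inr (Or.inr (Or.inr (Or.inl ⟨m, r - 1, h.next1 (by omega) hs⟩)))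
    · have hr1 := h.hr1
      have : r = 1 := by omega
      subst this
      exact Or.inr (Or.inr (Or.inr (Or.inr (Or.inr (Or.inr (h.next2 hs))))))
  · exact Or.inr (Or.inr (Or.inr (Or.inr (Or.inr (Or.inl (h.next hs))))))
  · exact Or.inr (Or.inr (Or.inr (Or.inr (Or.inr (Or.inr (h.next hs))))))
  · exact Or.inl (h.next hn hs)

lemma BInv.unique (h : BInv n π) : ∃ m, ∀ k, 1 ≤ k → k ≤ n → k ≠ m → Av n π k ≤ Tv n π := by
  rcases h with h | ⟨m, h⟩ | ⟨m, r, h⟩ | ⟨m, r, h⟩ | h | h | h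
  · exact ⟨0, fun k h1 h2 _ => h.le k h1 (by omega)⟩
  · exact ⟨m, fun k h1 h2 h3 => h.le k h1 (by omega) h3⟩
  · exact ⟨0, fun k h1 h2 _ => h.le k h1 (by omega)⟩
  · exact ⟨0, fun k h1 h2 _ => h.le k h1 (by omega)⟩
  · exact ⟨0, fun k h1 h2 _ => h.base.le2 h.ski k h1 (by omega)⟩
  · exact ⟨0, fun k h1 h2 _ => h.base.le2 h.ski k h1 (by omega)⟩
  · exact ⟨1, fun k h1 h2 h3 => h.le k (by omega) (by omega)⟩

end stateSA

/-- For every policy visited by Bland's policy iteration on `𝔅_n` started at `π_0`,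
at most one of the edges `travel i`, `i ∈ {1,…,n}`, is an improving switch. -/
theorem stmt8 (n : ℕ) (hn : 1 ≤ n) (π : BV → BV)
    (hvis : BlandReaches n (NB n) (pi0 n) π)
    (i j : ℕ) (hi1 : 1 ≤ i) (hin : i ≤ n) (hj1 : 1 ≤ j) (hjn : j ≤ n)
    (h1 : BImproving n π BV.t (BV.a i)) (h2 : BImproving n π BV.t (BV.a j)) :
    i = j := by
  have hinv : BInv n π := by
    clear h1 h2
    unfold BlandReaches at hvis
    induction hvis with
    | refl => exact Or.inl (pi0_SA hn)
    | tail _ hs ih => 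
      exact BInv.next hn (ih) hs
  obtain ⟨m, hm⟩ := hinv.unique
  rw [imp_travel hi1 hin] at h1
  rw [imp_travel hj1 hjn] at h2
  have e1 : i = m := by
    by_contra hne
    exact absurd h1 (not_lt.2 (hm i hi1 hin hne))
  have e2 : j = m := by
    by_contra hne
    exact absurd h2 (not_lt.2 (hm j hj1 hjn hne))
  rw [e1, e2]
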